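/- arXiv:2301.00085 — 3 statements merged into one kernel-verified Lean document; each statement's English description precedes it below -/
import Mathlib

section
/- For every integer r ≥ 3 and every ε > 0 there exists d₀ = d₀(r, ε) such that for every fixed real d ≥ d₀ the following holds. Set a := (1 + ε/2)·(r log d/((r−1)d))^{1/(r−1)}, κ_j := (10d/r)·C(r,j)·a^j for 1 ≤ j ≤ r−1, and p = p(n) := d(r−1)!/n^{r−1}. Then with probability 1 − o(1/n) (i.e., n times the failure probability tends to 0 as n → ∞), the binomial random hypergraph H_r(n,p) admits a proper coloring using at most (1 + ε/2)·((r−1)d/(r log d))^{1/(r−1)} colors such that for every color class A and every integer j with 1 ≤ j ≤ r−1, the number of hyperedges having exactly j vertices in A is at most κ_j·n. -/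
/-!
Let `κ = ((r-1)d / (r log d))^{1/(r-1)}` and let `k` be about `(1 + ε/4) κ`. The good coloring uses
`k` colors for almost all vertices and `o(κ)` further colors for the remaining ones; all its classes
have at most `a n` vertices.

*A balanced coloring exists with probability at least `e^{-ρn}`* (`prob_balanced_ge`), where
`ρ = 2 e⁶ log k / k²`. The second moment method is applied to the number of proper colorings with
classes of size at most `(1+η)n/k`, each coloring being weighted by the inverse of its probability
of being proper. The second moment is then a sum of `(1-p)^{-m(σ,τ)}` over pairs of colorings,
`m(σ,τ)` being the number of potential edges that are monochromatic in both. An inequality for each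
pair of colors (`entry_ineq`) bounds this term by the likelihood of the pair under its own empirical
distribution, up to the factor `k^{2n} e^{ρn/2}`, and the likelihoods sum up to at most the number of
types, which is polynomial in `n` (`sum_types_le`). So no precise analysis of the overlaps is needed.

*Deletion* (`prob_deletion`). The least number of vertices to be deleted in order to make some
balanced coloring proper has bounded differences with respect to `n` independent blocks of edges.
Since it vanishes with probability at least `e^{-ρn}`, it is at most `2√(2ρ) n ≤ (log k / k) n` except
with probability `e^{-ρn}`.

*The deleted set* (`prob_sparse`, `combine_coloring`). Except with probability `O(n⁻²)`, every set
`W` of at most `(log k / k) n` vertices spans fewer than `c |W|` edges with `c = O((log k)^r)`, so the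
deleted set can be colored greedily with `r c` new colors. The classes are cut into `O(log k)` pieces
of size at most `a n`. The number of new colors is polylogarithmic in `k`.

*Edge counts* (`prob_meeting`). By Chernoff's bound and a union bound over all vertex sets, the
number of edges with exactly `j` vertices in a set of size at most `a n` exceeds ten times the bound
for its expectation only with exponentially small probability.

The failure probability is therefore `O(n⁻²)`.
-/

open Finset Filter Real

open scoped Classical

/-- All `r`-element subsets of `Fin n`, i.e. the potential hyperedges. -/
noncomputable def edgeCandidates (n r : ℕ) : Finset (Finset (Fin n)) :=
  Finset.univ.filter (fun e : Finset (Fin n) => e.card = r)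

/-- The probability that the binomial random `r`-uniform hypergraph `H_r(n,p)`
(each of the `C(n,r)` possible hyperedges included independently with probability `p`)
satisfies the property `P` of its edge set. -/
noncomputable def binomProb (n r : ℕ) (p : ℝ) (P : Finset (Finset (Fin n)) → Prop) : ℝ :=
  ∑ E ∈ (edgeCandidates n r).powerset,
    if P E then p ^ E.card * (1 - p) ^ ((edgeCandidates n r).card - E.card) else 0

/-- A coloring `c` of the vertices is proper for the hypergraph with edge set `E`
if no edge has all its vertices of the same color. -/
def ProperColoring {n k : ℕ} (E : Finset (Finset (Fin n))) (c : Fin n → Fin k) : Prop :=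
  ∀ e ∈ E, ∃ v ∈ e, ∃ w ∈ e, c v ≠ c w

/-- The chromatic number of the hypergraph with edge set `E`. -/
noncomputable def chromaticNumber {n : ℕ} (E : Finset (Finset (Fin n))) : ℕ :=
  sInf {k : ℕ | ∃ c : Fin n → Fin k, ProperColoring E c}

/-- `E` admits a proper coloring with at most `kmax` colors such that for every color class
`A` and every `j` with `1 ≤ j ≤ r−1`, the number of hyperedges having exactly `j` vertices
in `A` is at most `κ j · n`. -/
def HasGoodColoring {n : ℕ} (r : ℕ) (kmax : ℝ) (κ : ℕ → ℝ)
    (E : Finset (Finset (Fin n))) : Prop :=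
  ∃ k : ℕ, (k : ℝ) ≤ kmax ∧ ∃ c : Fin n → Fin k, ProperColoring E c ∧
    ∀ i : Fin k, ∀ j : ℕ, 1 ≤ j → j ≤ r - 1 →
      ((E.filter (fun e => (e.filter (fun v => c v = i)).card = j)).card : ℝ) ≤ κ j * n

/-! ### Expectation over independent edges -/

/-- Expectation of `F` over the random subset of `U` that contains each element of `U`
independently with probability `p`. -/
noncomputable def Ex {α : Type*} (p : ℝ) (U : Finset α) (F : Finset α → ℝ) : ℝ :=
  ∑ E ∈ U.powerset, p ^ E.card * (1 - p) ^ (U.card - E.card) * F E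

/-- Probability of the event `P` for the random subset described at `Ex`. -/
noncomputable def Pr {α : Type*} (p : ℝ) (U : Finset α) (P : Finset α → Prop) : ℝ :=
  Ex p U (fun E => if P E then 1 else 0)

section Expectation

variable {α : Type*} {p : ℝ} {U : Finset α}

theorem Ex_add (F G : Finset α → ℝ) :
    Ex p U (fun E => F E + G E) = Ex p U F + Ex p U G := by
  simp only [Ex, mul_add, Finset.sum_add_distrib]

theorem Ex_const_mul (a : ℝ) (F : Finset α → ℝ) :
    Ex p U (fun E => a * F E) = a * Ex p U F := by
  simp only [Ex, Finset.mul_sum]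
  exact Finset.sum_congr rfl fun _ _ => by ring

theorem Ex_sum {ι : Type*} (s : Finset ι) (F : ι → Finset α → ℝ) :
    Ex p U (fun E => ∑ i ∈ s, F i E) = ∑ i ∈ s, Ex p U (F i) := by
  simp only [Ex, Finset.mul_sum]
  exact Finset.sum_comm

theorem Ex_congr {F G : Finset α → ℝ} (h : ∀ E ⊆ U, F E = G E) : Ex p U F = Ex p U G := by
  refine Finset.sum_congr rfl fun E hE => ?_
  rw [h E (Finset.mem_powerset.1 hE)]

theorem Ex_mono (hp : 0 ≤ p) (hp1 : p ≤ 1) {F G : Finset α → ℝ} (h : ∀ E ⊆ U, F E ≤ G E) :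
    Ex p U F ≤ Ex p U G := by
  refine Finset.sum_le_sum fun E hE => ?_
  have : 0 ≤ 1 - p := by linarith
  exact mul_le_mul_of_nonneg_left (h E (Finset.mem_powerset.1 hE)) (by positivity)

theorem Ex_insert {a : α} (ha : a ∉ U) (F : Finset α → ℝ) :
    Ex p (insert a U) F =
      (1 - p) * Ex p U F + p * Ex p U (fun E => F (insert a E)) := by
  unfold Ex
  rw [Finset.sum_powerset_insert ha, Finset.mul_sum, Finset.mul_sum]
  congr 1
  · refine Finset.sum_congr rfl fun E hE => ?_
    have h := Finset.card_le_card (Finset.mem_powerset.1 hE)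
    rw [Finset.card_insert_of_notMem ha, Nat.sub_add_comm h, pow_succ]
    ring
  · refine Finset.sum_congr rfl fun E hE => ?_
    have h : a ∉ E := fun h => ha (Finset.mem_powerset.1 hE h)
    rw [Finset.card_insert_of_notMem ha, Finset.card_insert_of_notMem h, Nat.add_sub_add_right,
      pow_succ]
    ring

theorem Ex_empty (F : Finset α → ℝ) : Ex p ∅ F = F ∅ := by simp [Ex]

theorem Ex_const (a : ℝ) : Ex p U (fun _ => a) = a := by
  induction U using Finset.induction_on with
  | empty => simp [Ex_empty]
  | insert x U hx ih => rw [Ex_insert hx, ih]; ring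

/-- Independence of the parts of the random set in two disjoint ground sets. -/
theorem Ex_union {V : Finset α} (h : Disjoint U V) (F : Finset α → ℝ) :
    Ex p (U ∪ V) F = Ex p U (fun A => Ex p V (fun B => F (A ∪ B))) := by
  induction U using Finset.induction_on generalizing F with
  | empty => simp [Ex_empty]
  | insert x U hx ih =>
    rw [Finset.disjoint_insert_left] at h
    have hx' : x ∉ U ∪ V := by simp [hx, h.1]
    rw [Finset.insert_union, Ex_insert hx', Ex_insert hx, ih h.2, ih h.2]
    simp only [Finset.insert_union]

/-- Expectations of products over the elements of the random set factorize. -/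
theorem Ex_prod (f : α → ℝ) :
    Ex p U (fun E => ∏ e ∈ E, f e) = ∏ e ∈ U, (1 - p + p * f e) := by
  induction U using Finset.induction_on with
  | empty => simp [Ex_empty]
  | insert x U hx ih =>
    rw [Ex_insert hx, Finset.prod_insert hx, ← ih, add_mul, mul_assoc, ← Ex_const_mul (f x)]
    congr 2
    exact Ex_congr fun E hE => Finset.prod_insert fun h => hx (hE h)

theorem Pr_mono (hp : 0 ≤ p) (hp1 : p ≤ 1) {P Q : Finset α → Prop}
    (h : ∀ E ⊆ U, P E → Q E) : Pr p U P ≤ Pr p U Q := by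
  refine Ex_mono hp hp1 fun E hE => ?_
  by_cases h1 : P E
  · simp [h1, h E hE h1]
  · simp only [h1, if_false]
    split_ifs <;> norm_num

theorem Pr_nonneg (hp : 0 ≤ p) (hp1 : p ≤ 1) (P : Finset α → Prop) : 0 ≤ Pr p U P := by
  have := Pr_mono (U := U) hp hp1 (P := fun _ => False) (Q := P) (fun _ _ h => h.elim)
  simpa [Pr, Ex_const] using this

theorem Pr_or_le (hp : 0 ≤ p) (hp1 : p ≤ 1) (P Q : Finset α → Prop) :
    Pr p U (fun E => P E ∨ Q E) ≤ Pr p U P + Pr p U Q := by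
  unfold Pr
  rw [← Ex_add]
  refine Ex_mono hp hp1 fun E _ => ?_
  by_cases h1 : P E <;> by_cases h2 : Q E <;> simp [h1, h2]

theorem Pr_exists_le (hp : 0 ≤ p) (hp1 : p ≤ 1) {ι : Type*} (s : Finset ι)
    (P : ι → Finset α → Prop) :
    Pr p U (fun E => ∃ i ∈ s, P i E) ≤ ∑ i ∈ s, Pr p U (P i) := by
  unfold Pr
  rw [← Ex_sum]
  refine Ex_mono hp hp1 fun E _ => ?_
  have h0 : ∀ i ∈ s, (0 : ℝ) ≤ if P i E then 1 else 0 := fun i _ => by split_ifs <;> norm_num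
  split_ifs with h
  · obtain ⟨i, hi, hP⟩ := h
    have := Finset.single_le_sum h0 hi
    simpa [hP] using this
  · exact Finset.sum_nonneg h0

/-- Markov's inequality in the form used for exponential moments. -/
theorem Pr_le_Ex (hp : 0 ≤ p) (hp1 : p ≤ 1) {P : Finset α → Prop} {F : Finset α → ℝ}
    (h0 : ∀ E ⊆ U, 0 ≤ F E) (h : ∀ E ⊆ U, P E → 1 ≤ F E) : Pr p U P ≤ Ex p U F := by
  refine Ex_mono hp hp1 fun E hE => ?_
  split_ifs with h1
  · exact h E hE h1
  · exact h0 E hE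

theorem Pr_disjoint {B : Finset α} (hB : B ⊆ U) :
    Pr p U (fun E => Disjoint E B) = (1 - p) ^ B.card := by
  have h1 : Pr p U (fun E => Disjoint E B)
      = Ex p U (fun E => ∏ e ∈ E, if e ∈ B then (0 : ℝ) else 1) := by
    refine Ex_congr fun E _ => ?_
    split_ifs with h
    · rw [Finset.prod_eq_one]
      intro e he
      simp [Finset.disjoint_left.1 h he]
    · rw [Finset.not_disjoint_iff] at h
      obtain ⟨e, he, heB⟩ := h
      exact (Finset.prod_eq_zero he (by simp [heB])).symm
  rw [h1, Ex_prod, ← Finset.prod_subset hB]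
  · rw [Finset.prod_congr rfl (g := fun _ => 1 - p), Finset.prod_const]
    intro e he; simp [he]
  · intro e _ he; simp [he]

/-- Chernoff's bound for an event `P` that forces at least `x` elements of `B` into the random
set. -/
theorem Pr_chernoff (hp : 0 ≤ p) (hp1 : p ≤ 1) {B : Finset α} (hB : B ⊆ U) {s : ℝ} (hs : 0 ≤ s)
    (x : ℝ) {P : Finset α → Prop}
    (hP : ∀ E ⊆ U, P E → ∃ T ⊆ E, T ⊆ B ∧ x ≤ (T.card : ℝ)) :
    Pr p U P ≤ Real.exp (-(s * x) + p * Real.exp s * B.card) := by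
  have h1 : Pr p U P ≤ Ex p U (fun E => Real.exp (-(s * x)) *
          ∏ e ∈ E, if e ∈ B then Real.exp s else 1) := by
    have key : ∀ E : Finset α, (∏ e ∈ E, if e ∈ B then Real.exp s else 1)
        = Real.exp (s * (E.filter (· ∈ B)).card) := by
      intro E
      rw [← Finset.prod_filter, Finset.prod_const, ← Real.exp_nat_mul, mul_comm]
    refine Pr_le_Ex hp hp1 (fun E _ => ?_) (fun E hEU hE => ?_)
    · rw [key]; positivity
    · obtain ⟨T, hTE, hTB, hx⟩ := hP E hEU hE
      have hT : (T.card : ℝ) ≤ ((E.filter (· ∈ B)).card : ℝ) := by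
        exact_mod_cast Finset.card_le_card fun e he =>
          Finset.mem_filter.2 ⟨hTE he, hTB he⟩
      rw [key, ← Real.exp_add, Real.one_le_exp_iff]
      nlinarith
  refine h1.trans ?_
  rw [Ex_const_mul, Ex_prod, Real.exp_add]
  refine mul_le_mul_of_nonneg_left ?_ (Real.exp_pos _).le
  rw [← Finset.prod_subset hB]
  · calc ∏ e ∈ B, (1 - p + p * if e ∈ B then Real.exp s else 1)
        ≤ ∏ _e ∈ B, Real.exp (p * Real.exp s) := by
          refine Finset.prod_le_prod (fun e he => ?_) (fun e he => ?_)
          · have : 0 ≤ 1 - p := by linarith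
            split_ifs <;> positivity
          · simp only [he, if_true]
            have := Real.add_one_le_exp (p * Real.exp s)
            linarith
      _ = Real.exp (p * Real.exp s * B.card) := by
          rw [Finset.prod_const, ← Real.exp_nat_mul, mul_comm]
  · intro e _ he; simp [he]

/-- The second moment bound for the probability of `X ≠ 0`, from the Cauchy–Schwarz
inequality. -/
theorem second_moment (hp : 0 ≤ p) (hp1 : p ≤ 1) (X : Finset α → ℝ) :
    Ex p U X ^ 2 ≤ Ex p U (fun E => X E ^ 2) * Pr p U (fun E => X E ≠ 0) := by
  have h1p : 0 ≤ 1 - p := by linarith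
  have key := Finset.sum_mul_sq_le_sq_mul_sq U.powerset
    (fun E => √(p ^ E.card * (1 - p) ^ (U.card - E.card)) * X E)
    (fun E => √(p ^ E.card * (1 - p) ^ (U.card - E.card)) * if X E ≠ 0 then 1 else 0)
  have hw : ∀ E : Finset α, 0 ≤ p ^ E.card * (1 - p) ^ (U.card - E.card) :=
    fun E => by positivity
  unfold Pr Ex
  refine le_trans (le_of_eq ?_) (key.trans (le_of_eq ?_))
  · congr 1
    refine Finset.sum_congr rfl fun E _ => ?_
    have h2 := Real.mul_self_sqrt (hw E)
    by_cases h : X E = 0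
    · simp [h]
    · simp only [h, ne_eq, not_false_eq_true, if_true]
      linear_combination (-X E) * h2
  · congr 1
    · refine Finset.sum_congr rfl fun E _ => ?_
      rw [mul_pow, Real.sq_sqrt (hw E)]
    · refine Finset.sum_congr rfl fun E _ => ?_
      rw [mul_pow, Real.sq_sqrt (hw E)]
      by_cases h : X E = 0 <;> simp [h]

end Expectation

/-! ### Bounded differences -/

section BoundedDifferences

variable {α : Type*} {p : ℝ}

/-- A single block: a function of oscillation at most `1` is sub-Gaussian. The proof compares with
an independent copy and symmetrizes. -/
theorem subgaussian_block (hp : 0 ≤ p) (hp1 : p ≤ 1) {U : Finset α} {φ : Finset α → ℝ}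
    (h : ∀ A ⊆ U, ∀ B ⊆ U, φ A ≤ φ B + 1) (s : ℝ) :
    Ex p U (fun A => Real.exp (s * φ A)) ≤ Real.exp (s * Ex p U φ + s ^ 2 / 2) := by
  set m := Ex p U φ with hm
  -- Jensen's inequality for the exponential, from its tangent at `-(s * m)`
  have h1 : Real.exp (-(s * m)) ≤ Ex p U (fun B => Real.exp (-(s * φ B))) := by
    have h2 : Ex p U (fun B => Real.exp (-(s * m)) * (1 + s * m + (-s) * φ B))
        ≤ Ex p U (fun B => Real.exp (-(s * φ B))) := by
      refine Ex_mono hp hp1 fun B _ => ?_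
      have h3 := Real.add_one_le_exp (s * m - s * φ B)
      have h4 : Real.exp (-(s * φ B)) = Real.exp (-(s * m)) * Real.exp (s * m - s * φ B) := by
        rw [← Real.exp_add]; congr 1; ring
      rw [h4]
      exact mul_le_mul_of_nonneg_left (by linarith) (Real.exp_pos _).le
    rw [Ex_const_mul, Ex_add, Ex_const, Ex_const_mul, ← hm] at h2
    refine le_trans (le_of_eq ?_) h2
    ring
  have hpos : 0 ≤ Ex p U (fun A => Real.exp (s * φ A)) := by
    have := Ex_mono (U := U) hp hp1 (F := fun _ => 0) (G := fun A => Real.exp (s * φ A))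
      (fun E _ => (Real.exp_pos _).le)
    rwa [Ex_const] at this
  have hprod : ∀ t : ℝ, Ex p U (fun A => Real.exp (t * φ A)) * Ex p U (fun B => Real.exp (-(t * φ B)))
      = Ex p U (fun A => Ex p U (fun B => Real.exp (t * (φ A - φ B)))) := by
    intro t
    rw [mul_comm, ← Ex_const_mul]
    refine Ex_congr fun A _ => ?_
    rw [mul_comm, ← Ex_const_mul]
    refine Ex_congr fun B _ => ?_
    rw [← Real.exp_add]; congr 1; ring
  have hsym : 2 * (Ex p U (fun A => Real.exp (s * φ A)) * Ex p U (fun B => Real.exp (-(s * φ B))))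
      ≤ 2 * Real.exp (s ^ 2 / 2) := by
    have e1 := hprod s
    have e2 := hprod (-s)
    simp only [neg_mul, neg_neg] at e2
    have e3 : 2 * (Ex p U (fun A => Real.exp (s * φ A)) * Ex p U (fun B => Real.exp (-(s * φ B))))
        = Ex p U (fun A => Ex p U (fun B => Real.exp (s * (φ A - φ B))
            + Real.exp (-(s * (φ A - φ B))))) := by
      simp only [Ex_add]
      rw [← e1, ← e2]; ring
    rw [e3]
    have : Ex p U (fun A => Ex p U (fun B => Real.exp (s * (φ A - φ B))
            + Real.exp (-(s * (φ A - φ B))))) ≤ Ex p U (fun _ => Ex p U (fun _ =>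
              2 * Real.exp (s ^ 2 / 2))) := by
      refine Ex_mono hp hp1 fun A hA => Ex_mono hp hp1 fun B hB => ?_
      have hc : Real.exp (s * (φ A - φ B)) + Real.exp (-(s * (φ A - φ B)))
          = 2 * Real.cosh (s * (φ A - φ B)) := by rw [Real.cosh_eq]; ring
      rw [hc]
      have hb : |φ A - φ B| ≤ 1 := by
        rw [abs_le]; constructor
        · linarith [h B hB A hA]
        · linarith [h A hA B hB]
      have h5 : Real.cosh (s * (φ A - φ B)) ≤ Real.cosh s := by
        rw [Real.cosh_le_cosh, abs_mul]
        exact mul_le_of_le_one_right (abs_nonneg _) hb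
      have h6 := Real.cosh_le_exp_half_sq s
      linarith
    rwa [Ex_const, Ex_const] at this
  have h7 : Ex p U (fun A => Real.exp (s * φ A)) * Real.exp (-(s * m)) ≤ Real.exp (s ^ 2 / 2) :=
    (mul_le_mul_of_nonneg_left h1 hpos).trans (by linarith)
  rw [Real.exp_add]
  have h8 : Real.exp (-(s * m)) * Real.exp (s * m) = 1 := by rw [← Real.exp_add]; simp
  calc Ex p U (fun A => Real.exp (s * φ A))
      = Real.exp (s * m) * (Ex p U (fun A => Real.exp (s * φ A)) * Real.exp (-(s * m))) := by
        linear_combination (-Ex p U (fun A => Real.exp (s * φ A))) * h8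
    _ ≤ Real.exp (s * m) * Real.exp (s ^ 2 / 2) :=
        mul_le_mul_of_nonneg_left h7 (Real.exp_pos _).le

/-- Exponential moment form of the bounded differences inequality. The ground set is cut into
blocks by the labelling `b`, and re-randomizing one block changes `F` by at most `1`. -/
theorem subgaussian_blocks (hp : 0 ≤ p) (hp1 : p ≤ 1) {ι : Type*} (b : α → ι) (s : ℝ)
    (T : Finset ι) : ∀ (U : Finset α) (_ : ∀ e ∈ U, b e ∈ T) (F : Finset α → ℝ)
    (_ : ∀ v, ∀ A ⊆ U, ∀ B ⊆ U, (∀ e, b e ≠ v → (e ∈ A ↔ e ∈ B)) → F A ≤ F B + 1),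
    Ex p U (fun A => Real.exp (s * F A)) ≤ Real.exp (s * Ex p U F + T.card * (s ^ 2 / 2)) := by
  induction T using Finset.induction_on with
  | empty =>
    intro U hU F _
    have : U = ∅ := Finset.eq_empty_of_forall_notMem fun e he => by simpa using hU e he
    subst this
    simp [Ex_empty]
  | insert v T hv ih =>
    intro U hU F hF
    set U1 := U.filter (fun e => b e ≠ v) with hU1
    set U2 := U.filter (fun e => b e = v) with hU2
    have hdis : Disjoint U1 U2 := by
      rw [Finset.disjoint_left]; intro e h1 h2
      exact (Finset.mem_filter.1 h1).2 (Finset.mem_filter.1 h2).2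
    have hUU : U = U1 ∪ U2 := by
      ext e; simp only [hU1, hU2, Finset.mem_union, Finset.mem_filter]; tauto
    have hs1 : U1 ⊆ U := Finset.filter_subset _ _
    have hs2 : U2 ⊆ U := Finset.filter_subset _ _
    set G : Finset α → ℝ := fun A => Ex p U2 (fun B => F (A ∪ B)) with hG
    have hEF : Ex p U F = Ex p U1 G := by rw [hUU, Ex_union hdis]
    have step1 : Ex p U (fun A => Real.exp (s * F A))
        ≤ Ex p U1 (fun A => Real.exp (s ^ 2 / 2) * Real.exp (s * G A)) := by
      have : Ex p U (fun A => Real.exp (s * F A))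
          = Ex p U1 (fun A => Ex p U2 (fun B => Real.exp (s * F (A ∪ B)))) := by
        conv_lhs => rw [hUU]
        rw [Ex_union hdis]
      rw [this]
      refine Ex_mono hp hp1 fun A hA => ?_
      rw [← Real.exp_add, add_comm]
      refine subgaussian_block hp hp1 (φ := fun B => F (A ∪ B)) (fun B hB C hC => ?_) s
      refine hF v _ (Finset.union_subset (hA.trans hs1) (hB.trans hs2)) _
        (Finset.union_subset (hA.trans hs1) (hC.trans hs2)) fun e he => ?_
      have h1 : e ∉ B := fun h => he (Finset.mem_filter.1 (hB h)).2
      have h2 : e ∉ C := fun h => he (Finset.mem_filter.1 (hC h)).2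
      simp [h1, h2]
    have step2 := ih U1 (fun e he => by
        have h1 := Finset.mem_filter.1 he
        exact (Finset.mem_insert.1 (hU e h1.1)).resolve_left h1.2) G (fun w A hA B hB hAB => by
        have : Ex p U2 (fun C => F (A ∪ C)) ≤ Ex p U2 (fun C => F (B ∪ C) + 1) := by
          refine Ex_mono hp hp1 fun C hC => ?_
          refine hF w _ (Finset.union_subset (hA.trans hs1) (hC.trans hs2)) _
            (Finset.union_subset (hB.trans hs1) (hC.trans hs2)) fun e he => ?_
          simp [hAB e he]
        rwa [Ex_add, Ex_const] at this)
    rw [Ex_const_mul] at step1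
    refine step1.trans ((mul_le_mul_of_nonneg_left step2 (Real.exp_pos _).le).trans ?_)
    rw [← Real.exp_add, hEF, Finset.card_insert_of_notMem hv]
    refine Real.exp_le_exp.2 ?_
    push_cast
    linarith

/-- If a functional with bounded differences is nonpositive with probability at least `exp (-δ n)`, then
it is less than `2 √(2δ) n` except with probability `exp (-δ n)`; here `t` plays the role of
`√(2δ) n`. -/
theorem concentration (hp : 0 ≤ p) (hp1 : p ≤ 1) {n : ℕ} (hn : 0 < n) (b : α → Fin n)
    (U : Finset α) (F : Finset α → ℝ)
    (hF : ∀ v, ∀ A ⊆ U, ∀ B ⊆ U, (∀ e, b e ≠ v → (e ∈ A ↔ e ∈ B)) → F A ≤ F B + 1)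
    {t : ℝ} (ht : 0 ≤ t)
    (hA : Real.exp (-(t ^ 2 / (2 * n))) ≤ Pr p U (fun E => F E ≤ 0)) :
    Pr p U (fun E => 2 * t ≤ F E) ≤ Real.exp (-(t ^ 2 / (2 * n))) := by
  have hn' : (0 : ℝ) < n := by exact_mod_cast hn
  set m := Ex p U F with hm
  have mgf : ∀ s : ℝ, Ex p U (fun A => Real.exp (s * F A)) ≤ Real.exp (s * m + n * (s ^ 2 / 2)) := by
    intro s
    have := subgaussian_blocks hp hp1 b s Finset.univ U (fun _ _ => Finset.mem_univ _) F hF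
    simpa using this
  -- a mean above `t` would make `F ≤ 0` too unlikely
  have hmt : m ≤ t := by
    by_contra hcon
    push Not at hcon
    have h1 : Pr p U (fun E => F E ≤ 0) ≤ Ex p U (fun A => Real.exp ((-(m / n)) * F A)) := by
      refine Pr_le_Ex hp hp1 (fun E _ => (Real.exp_pos _).le) (fun E _ hE => ?_)
      rw [Real.one_le_exp_iff]
      have : 0 ≤ m / n := div_nonneg (by linarith) hn'.le
      nlinarith
    have h2 := Real.exp_le_exp.1 (hA.trans (h1.trans (mgf _)))
    have h3 : -(m / n) * m + n * ((-(m / n)) ^ 2 / 2) = -(m ^ 2 / (2 * n)) := by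
      field_simp; ring
    rw [h3] at h2
    have h4 : m ^ 2 / (2 * n) ≤ t ^ 2 / (2 * n) := by linarith
    rw [div_le_div_iff_of_pos_right (by positivity)] at h4
    nlinarith
  have h1 : Pr p U (fun E => 2 * t ≤ F E)
      ≤ Ex p U (fun A => Real.exp (-((t / n) * (2 * t))) * Real.exp ((t / n) * F A)) := by
    refine Pr_le_Ex hp hp1 (fun E _ => by positivity) (fun E _ hE => ?_)
    rw [← Real.exp_add, Real.one_le_exp_iff]
    have : 0 ≤ t / n := div_nonneg ht hn'.le
    nlinarith
  rw [Ex_const_mul] at h1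
  refine h1.trans ((mul_le_mul_of_nonneg_left (mgf _) (Real.exp_pos _).le).trans ?_)
  rw [← Real.exp_add]
  refine Real.exp_le_exp.2 ?_
  have h5 : (t / n) * m ≤ (t / n) * t := mul_le_mul_of_nonneg_left hmt (div_nonneg ht hn'.le)
  have h6 : -(t / n * (2 * t)) + (t / n * t + n * ((t / n) ^ 2 / 2)) = -(t ^ 2 / (2 * n)) := by
    field_simp; ring
  linarith

end BoundedDifferences

/-! ### The second moment of the number of colorings -/

/-- The potential edges on which the coloring `f` is constant. -/
noncomputable def monoEdges {n : ℕ} {β : Type*} (r : ℕ) (f : Fin n → β) :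
    Finset (Finset (Fin n)) :=
  (edgeCandidates n r).filter (fun e => ∀ v ∈ e, ∀ w ∈ e, f v = f w)

theorem mem_monoEdges {n r : ℕ} {β : Type*} {f : Fin n → β} {e : Finset (Fin n)} :
    e ∈ monoEdges r f ↔ e ∈ edgeCandidates n r ∧ ∀ v ∈ e, ∀ w ∈ e, f v = f w :=
  Finset.mem_filter

/-- The size of the color class of `c` in the coloring `f`. -/
noncomputable def cnt {n : ℕ} {β : Type*} (f : Fin n → β) (c : β) : ℕ :=
  (Finset.univ.filter (fun v => f v = c)).card

theorem properColoring_iff {n k r : ℕ} {E : Finset (Finset (Fin n))}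
    (hE : E ⊆ edgeCandidates n r) (σ : Fin n → Fin k) :
    ProperColoring E σ ↔ Disjoint E (monoEdges r σ) := by
  unfold ProperColoring
  rw [Finset.disjoint_left]
  constructor
  · intro h e he hm
    obtain ⟨v, hv, w, hw, hne⟩ := h e he
    exact hne ((mem_monoEdges.1 hm).2 v hv w hw)
  · intro h e he
    by_contra hcon
    push Not at hcon
    exact h he (mem_monoEdges.2 ⟨hE he, hcon⟩)

theorem monoEdges_pair {n r : ℕ} {β γ : Type*} (σ : Fin n → β) (τ : Fin n → γ) :
    monoEdges r σ ∩ monoEdges r τ = monoEdges r (fun v => (σ v, τ v)) := by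
  ext e
  simp only [monoEdges, Finset.mem_inter, Finset.mem_filter, Prod.mk.injEq]
  constructor
  · rintro ⟨⟨h1, h2⟩, _, h3⟩
    exact ⟨h1, fun v hv w hw => ⟨h2 v hv w hw, h3 v hv w hw⟩⟩
  · rintro ⟨h1, h2⟩
    exact ⟨⟨h1, fun v hv w hw => (h2 v hv w hw).1⟩, h1, fun v hv w hw => (h2 v hv w hw).2⟩

theorem card_monoEdges_le {n r : ℕ} (hr : 1 ≤ r) {β : Type*} [Fintype β] (f : Fin n → β) :
    (monoEdges r f).card ≤ ∑ c : β, (cnt f c).choose r := by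
  have hsub : monoEdges r f ⊆ Finset.univ.biUnion
      (fun c : β => (Finset.univ.filter (fun v => f v = c)).powersetCard r) := by
    intro e he
    obtain ⟨h1, h2⟩ := Finset.mem_filter.1 he
    have hc : e.card = r := (Finset.mem_filter.1 h1).2
    obtain ⟨v, hv⟩ : e.Nonempty := Finset.card_pos.1 (by omega)
    rw [Finset.mem_biUnion]
    refine ⟨f v, Finset.mem_univ _, Finset.mem_powersetCard.2 ⟨fun w hw => ?_, hc⟩⟩
    exact Finset.mem_filter.2 ⟨Finset.mem_univ _, h2 w hw v hv⟩
  refine (Finset.card_le_card hsub).trans (Finset.card_biUnion_le.trans ?_)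
  exact Finset.sum_le_sum fun c _ => by rw [Finset.card_powersetCard]; rfl

/-- Second moment bound for the number of proper colorings in `S`, each coloring being weighted by
the inverse of its probability of being proper. The weights make the first moment equal to `|S|`,
so that no balance condition on the colorings is needed at this point. -/
theorem second_moment_coloring {n k r : ℕ} {p : ℝ} (hp : 0 ≤ p) (hp1 : p < 1)
    (S : Finset (Fin n → Fin k)) :
    (S.card : ℝ) ^ 2 ≤
      (∑ σ ∈ S, ∑ τ ∈ S, ((1 - p)⁻¹) ^ (monoEdges r (fun v => (σ v, τ v))).card) *
        Pr p (edgeCandidates n r) (fun E => ∃ σ ∈ S, ProperColoring E σ) := by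
  have hq : 0 < 1 - p := by linarith
  set U := edgeCandidates n r with hU
  have hM : ∀ σ : Fin n → Fin k, monoEdges r σ ⊆ U := fun σ e he => (mem_monoEdges.1 he).1
  set X : Finset (Finset (Fin n)) → ℝ := fun E =>
    ∑ σ ∈ S, ((1 - p)⁻¹) ^ (monoEdges r σ).card * if Disjoint E (monoEdges r σ) then 1 else 0
    with hX
  have hpr : ∀ B ⊆ U, Ex p U (fun E => if Disjoint E B then (1 : ℝ) else 0) = (1 - p) ^ B.card :=
    fun B hB => by
      have := Pr_disjoint (p := p) hB
      unfold Pr at this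
      convert this
  have first : Ex p U X = S.card := by
    rw [hX, Ex_sum, Finset.sum_congr rfl (g := fun _ => (1 : ℝ))]
    · simp
    · intro σ _
      rw [Ex_const_mul, hpr _ (hM σ), ← mul_pow, inv_mul_cancel₀ hq.ne', one_pow]
  have second : Ex p U (fun E => X E ^ 2) =
      ∑ σ ∈ S, ∑ τ ∈ S, ((1 - p)⁻¹) ^ (monoEdges r (fun v => (σ v, τ v))).card := by
    have h1 : ∀ E, X E ^ 2 = ∑ σ ∈ S, ∑ τ ∈ S,
        ((1 - p)⁻¹) ^ ((monoEdges r σ).card + (monoEdges r τ).card) *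
          if Disjoint E (monoEdges r σ ∪ monoEdges r τ) then 1 else 0 := by
      intro E
      rw [hX, pow_two, Finset.sum_mul_sum]
      refine Finset.sum_congr rfl fun σ _ => Finset.sum_congr rfl fun τ _ => ?_
      simp only [pow_add, Finset.disjoint_union_right]
      by_cases a : Disjoint E (monoEdges r σ) <;> by_cases b : Disjoint E (monoEdges r τ) <;>
        simp [a, b]
    simp only [h1]
    rw [Ex_sum]
    refine Finset.sum_congr rfl fun σ _ => ?_
    rw [Ex_sum]
    refine Finset.sum_congr rfl fun τ _ => ?_
    rw [Ex_const_mul, hpr _ (Finset.union_subset (hM σ) (hM τ)), ← monoEdges_pair,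
      ← Finset.card_union_add_card_inter, pow_add, mul_right_comm, ← mul_pow,
      inv_mul_cancel₀ hq.ne', one_pow, one_mul]
  have h := second_moment hp hp1.le (U := U) X
  rw [first, second] at h
  refine h.trans (mul_le_mul_of_nonneg_left ?_ ?_)
  · refine Pr_mono hp hp1.le fun E hE hne => ?_
    obtain ⟨σ, hσ, hne⟩ := Finset.exists_ne_zero_of_sum_ne_zero hne
    refine ⟨σ, hσ, (properColoring_iff hE σ).2 ?_⟩
    by_contra hcon
    simp [hcon] at hne
  · exact Finset.sum_nonneg fun _ _ => Finset.sum_nonneg fun _ _ =>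
      pow_nonneg (inv_nonneg.2 hq.le) _

theorem sum_cnt {n : ℕ} {β : Type*} [Fintype β] (f : Fin n → β) : ∑ c, cnt f c = n := by
  have := Finset.card_eq_sum_card_fiberwise (f := f) (s := Finset.univ) (t := Finset.univ)
    (fun _ _ => Finset.mem_univ _)
  simpa [cnt] using this.symm

theorem prod_comp_cnt {n : ℕ} {β : Type*} [Fintype β] (f : Fin n → β) (g : β → ℝ) :
    ∏ v, g (f v) = ∏ c, g c ^ cnt f c := by
  rw [← Finset.prod_fiberwise_of_maps_to (s := Finset.univ) (t := Finset.univ) (g := f)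
    (fun _ _ => Finset.mem_univ _)]
  refine Finset.prod_congr rfl fun c _ => ?_
  rw [Finset.prod_congr rfl (g := fun _ => g c), Finset.prod_const]
  · rfl
  · intro v hv; rw [(Finset.mem_filter.1 hv).2]

theorem sum_prod_fun {n : ℕ} {β : Type*} [Fintype β] (g : β → ℝ) :
    ∑ f : Fin n → β, ∏ v, g (f v) = (∑ c, g c) ^ n := by
  have := (Finset.prod_univ_sum (fun _ : Fin n => (Finset.univ : Finset β)) (fun _ c => g c)).symm
  simpa using this

/-- Method of types: under the empirical distribution `α` of `f`, the probability
`∏ v, α (f v)` of `f`, summed over all `f`, is at most the number of types. -/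
theorem sum_types_le {n : ℕ} (hn : 0 < n) {β : Type*} [Fintype β] :
    ∑ f : Fin n → β, ∏ v, ((cnt f (f v) : ℝ) / n) ≤ ((n : ℝ) + 1) ^ Fintype.card β := by
  have hn' : (n : ℝ) ≠ 0 := by positivity
  have hmaps : ∀ f ∈ (Finset.univ : Finset (Fin n → β)),
      (fun c => cnt f c) ∈ Fintype.piFinset (fun _ : β => Finset.range (n + 1)) := by
    intro f _
    rw [Fintype.mem_piFinset]
    intro c
    rw [Finset.mem_range, Nat.lt_succ_iff]
    calc cnt f c ≤ (Finset.univ : Finset (Fin n)).card := Finset.card_filter_le _ _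
      _ = n := by simp
  rw [← Finset.sum_fiberwise_of_maps_to hmaps]
  have hone : ∀ t ∈ Fintype.piFinset (fun _ : β => Finset.range (n + 1)),
      ∑ f ∈ Finset.univ.filter (fun f : Fin n → β => (fun c => cnt f c) = t),
        ∏ v, ((cnt f (f v) : ℝ) / n) ≤ 1 := by
    intro t _
    by_cases hex : ∃ f : Fin n → β, (fun c => cnt f c) = t
    · obtain ⟨f0, hf0⟩ := hex
      have hsum : ∑ c, (t c : ℝ) / n = 1 := by
        rw [← Finset.sum_div, div_eq_one_iff_eq hn', ← hf0]
        exact_mod_cast sum_cnt f0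
      calc ∑ f ∈ Finset.univ.filter (fun f : Fin n → β => (fun c => cnt f c) = t),
            ∏ v, ((cnt f (f v) : ℝ) / n)
          = ∑ f ∈ Finset.univ.filter (fun f : Fin n → β => (fun c => cnt f c) = t),
            ∏ v, ((t (f v) : ℝ) / n) := by
            refine Finset.sum_congr rfl fun f hf => ?_
            rw [← (Finset.mem_filter.1 hf).2]
        _ ≤ ∑ f : Fin n → β, ∏ v, ((t (f v) : ℝ) / n) :=
            Finset.sum_le_sum_of_subset_of_nonneg (Finset.filter_subset _ _)
              fun f _ _ => Finset.prod_nonneg fun v _ => by positivity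
        _ = 1 := by
            rw [sum_prod_fun (fun c => (t c : ℝ) / n), hsum, one_pow]
    · rw [Finset.filter_eq_empty_iff.2 (fun f _ hf => hex ⟨f, hf⟩), Finset.sum_empty]
      norm_num
  refine (Finset.sum_le_sum hone).trans (le_of_eq ?_)
  simp

/-- The one-variable inequality behind the second moment computation. With `x = k α` and
`Λ ≈ log k`, it says that every entry `α` of the overlap matrix contributes less to the
energy than to the relative entropy, up to the last, negligible term. -/
theorem entry_ineq {r : ℕ} (hr : 3 ≤ r) {k Λ η θ x : ℝ} (hη : 0 ≤ η) (hk : 0 < k)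
    (hL : 4 ≤ Real.log k) (hθL : 2 ≤ θ * Real.log k) (hΛ0 : 0 ≤ Λ)
    (hΛ : Λ * (1 + η) ^ (r - 1) ≤ (1 - θ) * Real.log k) (hx0 : 0 ≤ x) (hx : x ≤ 1 + η) :
    Λ * x ^ r ≤ x * Real.log (k * x) - x + 1 / k + Real.log k * (Real.exp 2 / k) ^ 3 := by
  set L := Real.log k with hLdef
  have hΛL : Λ ≤ L := by
    have h1 : (1 : ℝ) ≤ (1 + η) ^ (r - 1) := one_le_pow₀ (by linarith)
    nlinarith
  have hexpk : Real.exp L = k := Real.exp_log hk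
  have hk4 : Real.exp 4 ≤ k := by rw [← hexpk]; exact Real.exp_le_exp.2 hL
  have he24 : Real.exp 2 * Real.exp 2 = Real.exp 4 := by rw [← Real.exp_add]; norm_num
  have he2 : 1 ≤ Real.exp 2 := Real.one_le_exp (by norm_num)
  have hkpos : 0 ≤ 1 / k := by positivity
  have hlast : 0 ≤ L * (Real.exp 2 / k) ^ 3 := by positivity
  obtain ⟨m, rfl⟩ : ∃ m, r = m + 3 := ⟨r - 3, by omega⟩
  -- for `x ≤ e² / k` the entropy term is nonnegative by itself; beyond that point `log (k x) ≥ 2`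
  -- and the inequality can be divided by `x`
  rcases le_or_gt x (Real.exp 2 / k) with hcase | hcase
  · have hx1 : x ≤ 1 := hcase.trans (by rw [div_le_one hk]; nlinarith)
    have h1 : Λ * x ^ (m + 3) ≤ L * (Real.exp 2 / k) ^ 3 := by
      have : x ^ (m + 3) ≤ (Real.exp 2 / k) ^ 3 :=
        (pow_le_pow_of_le_one hx0 hx1 (by omega)).trans (pow_le_pow_left₀ hx0 hcase 3)
      exact mul_le_mul hΛL this (by positivity) (by linarith)
    have h2 : 0 ≤ x * Real.log (k * x) - x + 1 / k := by
      rcases hx0.eq_or_lt with h0 | h0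
      · rw [← h0]; simpa using hk.le
      · have hy : 0 < k * x := by positivity
        have h3 := Real.one_sub_inv_le_log_of_pos hy
        have h4 : x * (1 - (k * x)⁻¹) ≤ x * Real.log (k * x) := mul_le_mul_of_nonneg_left h3 hx0
        have h5 : x * (1 - (k * x)⁻¹) = x - 1 / k := by field_simp
        linarith
    linarith
  · have hxpos : 0 < x := lt_of_le_of_lt (by positivity) hcase
    have hlogkx : Real.log (k * x) = L + Real.log x := Real.log_mul hk.ne' hxpos.ne'
    have hlog2 : 2 ≤ Real.log (k * x) := by
      rw [Real.le_log_iff_exp_le (by positivity)]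
      rw [div_lt_iff₀ hk] at hcase
      linarith
    suffices h : Λ * x ^ (m + 2) ≤ Real.log (k * x) - 1 by
      have h6 : x * (Λ * x ^ (m + 2)) ≤ x * (Real.log (k * x) - 1) :=
        mul_le_mul_of_nonneg_left h hx0
      have h7 : Λ * x ^ (m + 3) = x * (Λ * x ^ (m + 2)) := by ring
      rw [h7]; linarith
    rcases le_or_gt x (1 / 2) with hxa | hxa
    · have hp2 : x ^ (m + 2) ≤ x ^ 2 := pow_le_pow_of_le_one hx0 (by linarith) (by omega)
      have hb : Λ * x ^ (m + 2) ≤ L * x ^ 2 := mul_le_mul hΛL hp2 (by positivity) (by linarith)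
      rcases le_or_gt (k * x ^ 2) 1 with hxb | hxb
      · have : L * x ^ 2 ≤ 1 := (mul_le_mul_of_nonneg_right (Real.log_le_self hk.le)
          (by positivity)).trans hxb
        linarith
      · have h8 : 0 ≤ Real.log (k * x ^ 2) := Real.log_nonneg hxb.le
        rw [Real.log_mul hk.ne' (by positivity), Real.log_pow] at h8
        push_cast at h8
        have h9 : L * x ^ 2 ≤ L * (1 / 4) :=
          mul_le_mul_of_nonneg_left (by nlinarith) (by linarith)
        linarith
    · have h8 : -1 ≤ Real.log x := by
        rw [Real.le_log_iff_exp_le hxpos]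
        have h9 := Real.add_one_le_exp (1 : ℝ)
        have h10 : Real.exp (-1) ≤ 1 / 2 := by
          rw [Real.exp_neg, ← one_div]
          exact one_div_le_one_div_of_le (by norm_num) (by linarith)
        linarith
      have h11 : x ^ (m + 2) ≤ (1 + η) ^ (m + 2) := pow_le_pow_left₀ hx0 hx _
      have h12 : Λ * x ^ (m + 2) ≤ (1 - θ) * L :=
        (mul_le_mul_of_nonneg_left h11 hΛ0).trans (by simpa using hΛ)
      linarith

/-- The overlap term of a pair of colorings with classes of size at most `(1 + η) n / k`, compared
with the likelihood of the pair under its own empirical distribution. -/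
theorem overlap_bound {r n k : ℕ} (hr : 3 ≤ r) (hn : 0 < n) (hk : 0 < k) {d η θ p : ℝ}
    (hd : 0 < d) (hη : 0 ≤ η) (hL : 4 ≤ Real.log k) (hθL : 2 ≤ θ * Real.log k)
    (hΛ : (1 + η) ^ r * (d / r) ≤ (1 - θ) * Real.log k * (k : ℝ) ^ (r - 1))
    (hp : p = d * ((r - 1).factorial : ℝ) / (n : ℝ) ^ (r - 1)) (hp1 : p < 1)
    (hinv : (1 - p)⁻¹ ≤ Real.exp ((1 + η) * p))
    (f : Fin n → Fin k × Fin k) (hf : ∀ c, (cnt f c : ℝ) ≤ (1 + η) * n / k) :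
    ((1 - p)⁻¹) ^ (monoEdges r f).card ≤
      Real.exp (n * (Real.log k * Real.exp 6 / (k : ℝ) ^ 2)) * (k : ℝ) ^ (2 * n) *
        ∏ v, ((cnt f (f v) : ℝ) / n) := by
  have hn' : (0 : ℝ) < n := by exact_mod_cast hn
  have hk' : (0 : ℝ) < k := by exact_mod_cast hk
  have hr' : (0 : ℝ) < r := by exact_mod_cast (by omega : 0 < r)
  have hp0 : 0 ≤ p := by rw [hp]; positivity
  have hq : 0 < 1 - p := by linarith
  obtain ⟨m, rfl⟩ : ∃ m, r = m + 1 := ⟨r - 1, by omega⟩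
  simp only [Nat.add_sub_cancel] at hΛ hp
  set r := m + 1 with hrdef
  set L := Real.log k with hLdef
  set Λ : ℝ := (1 + η) * (d / r) / (k : ℝ) ^ m with hΛdef
  have hΛ0 : 0 ≤ Λ := by positivity
  have hΛ' : Λ * (1 + η) ^ (r - 1) ≤ (1 - θ) * L := by
    have : Λ * (1 + η) ^ (r - 1) = ((1 + η) ^ r * (d / r)) / (k : ℝ) ^ m := by
      rw [hΛdef, hrdef, Nat.add_sub_cancel, pow_succ]; ring
    rw [this, div_le_iff₀ (by positivity)]
    exact hΛ
  -- the contribution of a single pair of colors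
  have hcell : ∀ c, (1 + η) * p * ((cnt f c).choose r : ℝ) ≤
      cnt f c * Real.log ((k : ℝ) ^ 2 * (cnt f c / n)) - cnt f c + n / (k : ℝ) ^ 2
        + n * (L * Real.exp 6 / (k : ℝ) ^ 4) := by
    intro c
    set N : ℝ := (cnt f c : ℝ) with hN
    have hN0 : 0 ≤ N := Nat.cast_nonneg _
    have h1 : ((cnt f c).choose r : ℝ) ≤ N ^ r / (r.factorial : ℝ) := Nat.choose_le_pow_div r _
    have h2 := entry_ineq hr (k := k) (Λ := Λ) (η := η) (θ := θ) (x := k * (N / n)) hη hk' hL hθL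
      hΛ0 hΛ' (by positivity) (by
        have := hf c
        rw [le_div_iff₀ hk'] at this
        rw [← mul_div_assoc, div_le_iff₀ hn']
        linarith)
    have h3 : (1 + η) * p * (N ^ r / (r.factorial : ℝ))
        = n / k * (Λ * (k * (N / n)) ^ r) := by
      have : (r.factorial : ℝ) = r * (m.factorial : ℝ) := by
        rw [hrdef, Nat.factorial_succ]; push_cast; ring
      have hmf : (m.factorial : ℝ) ≠ 0 := by positivity
      rw [this, hp, hΛdef, hrdef, mul_pow, div_pow, pow_succ, pow_succ, pow_succ]
      rw [hrdef] at hr'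
      field_simp
    have h4 : n / k * (k * (N / n) * Real.log (k * (k * (N / n))) - k * (N / n) + 1 / k
          + L * (Real.exp 2 / k) ^ 3) = N * Real.log ((k : ℝ) ^ 2 * (N / n)) - N + n / (k : ℝ) ^ 2
        + n * (L * Real.exp 6 / (k : ℝ) ^ 4) := by
      have h5 : (k : ℝ) * (k * (N / n)) = (k : ℝ) ^ 2 * (N / n) := by ring
      have h6 : Real.exp 6 = Real.exp 2 ^ 3 := by rw [← Real.exp_nat_mul]; norm_num
      rw [h5, h6]
      field_simp
    calc (1 + η) * p * ((cnt f c).choose r : ℝ)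
        ≤ (1 + η) * p * (N ^ r / (r.factorial : ℝ)) := mul_le_mul_of_nonneg_left h1 (by positivity)
      _ = n / k * (Λ * (k * (N / n)) ^ r) := h3
      _ ≤ _ := mul_le_mul_of_nonneg_left h2 (by positivity)
      _ = _ := h4
  have hsumN : ∑ c, (cnt f c : ℝ) = n := by exact_mod_cast sum_cnt f
  have hexp : (1 + η) * p * (monoEdges r f).card ≤
      ∑ c, (cnt f c : ℝ) * Real.log ((k : ℝ) ^ 2 * (cnt f c / n))
        + n * (L * Real.exp 6 / (k : ℝ) ^ 2) := by
    have h1 : ((monoEdges r f).card : ℝ) ≤ ∑ c, ((cnt f c).choose r : ℝ) := by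
      exact_mod_cast card_monoEdges_le (by omega) f
    calc (1 + η) * p * (monoEdges r f).card
        ≤ (1 + η) * p * ∑ c, ((cnt f c).choose r : ℝ) :=
          mul_le_mul_of_nonneg_left h1 (by positivity)
      _ = ∑ c, (1 + η) * p * ((cnt f c).choose r : ℝ) := Finset.mul_sum _ _ _
      _ ≤ ∑ c, (cnt f c * Real.log ((k : ℝ) ^ 2 * (cnt f c / n)) - cnt f c + n / (k : ℝ) ^ 2
        + n * (L * Real.exp 6 / (k : ℝ) ^ 4)) := Finset.sum_le_sum fun c _ => hcell c
      _ = _ := by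
        rw [Finset.sum_add_distrib, Finset.sum_add_distrib, Finset.sum_sub_distrib, hsumN]
        simp only [Finset.sum_const, Finset.card_univ, Fintype.card_prod, Fintype.card_fin,
          nsmul_eq_mul]
        generalize ∑ c, (cnt f c : ℝ) * Real.log ((k : ℝ) ^ 2 * (cnt f c / n)) = y
        push_cast
        field_simp
        ring
  calc ((1 - p)⁻¹) ^ (monoEdges r f).card
      ≤ Real.exp ((1 + η) * p) ^ (monoEdges r f).card :=
        pow_le_pow_left₀ (inv_nonneg.2 hq.le) hinv _
    _ = Real.exp ((1 + η) * p * (monoEdges r f).card) := by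
        rw [← Real.exp_nat_mul, mul_comm]
    _ ≤ _ := Real.exp_le_exp.2 hexp
    _ = Real.exp (n * (L * Real.exp 6 / (k : ℝ) ^ 2)) *
        ∏ v, ((k : ℝ) ^ 2 * (cnt f (f v) / n)) := by
        rw [Real.exp_add, mul_comm]
        congr 1
        rw [prod_comp_cnt f (fun c => (k : ℝ) ^ 2 * (cnt f c / n)), Real.exp_sum]
        refine Finset.prod_congr rfl fun c _ => ?_
        rcases Nat.eq_zero_or_pos (cnt f c) with h0 | h0
        · simp [h0]
        · have : (0 : ℝ) < cnt f c := by exact_mod_cast h0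
          rw [Real.exp_nat_mul, Real.exp_log (by positivity)]
    _ = _ := by
        rw [Finset.prod_mul_distrib, Finset.prod_const, Finset.card_univ, Fintype.card_fin,
          ← pow_mul, mul_assoc]

/-- The colorings all of whose classes have at most `(1 + η) n / k` vertices. -/
noncomputable def balancedColorings (n k : ℕ) (η : ℝ) : Finset (Fin n → Fin k) :=
  Finset.univ.filter (fun σ => ∀ i, (cnt σ i : ℝ) ≤ (1 + η) * n / k)

theorem mem_balancedColorings {n k : ℕ} {η : ℝ} {σ : Fin n → Fin k} :
    σ ∈ balancedColorings n k η ↔ ∀ i, (cnt σ i : ℝ) ≤ (1 + η) * n / k := by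
  simp [balancedColorings]

/-- Chernoff's bound for the size of one class of a uniformly random coloring. -/
theorem card_unbalanced_le {n k : ℕ} (hk : 0 < k) {η : ℝ} (hη : 0 < η) (i : Fin k) :
    ((Finset.univ.filter (fun σ : Fin n → Fin k => ¬ (cnt σ i : ℝ) ≤ (1 + η) * n / k)).card : ℝ)
      ≤ (k : ℝ) ^ n * Real.exp (-(((1 + η) * Real.log (1 + η) - η) / k * n)) := by
  have hk' : (0 : ℝ) < k := by exact_mod_cast hk
  set x : ℝ := (1 + η) * n / k with hx
  set s : ℝ := Real.log (1 + η) with hs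
  have hs0 : 0 ≤ s := Real.log_nonneg (by linarith)
  have hes : Real.exp s = 1 + η := Real.exp_log (by linarith)
  have hprod : ∀ σ : Fin n → Fin k, ∏ v, (if σ v = i then (1 + η) else 1)
      = Real.exp (s * cnt σ i) := by
    intro σ
    rw [← Finset.prod_filter, Finset.prod_const, ← hes, ← Real.exp_nat_mul, mul_comm, cnt]
    congr!
  have hsum : ∑ c : Fin k, (if c = i then (1 + η) else 1) = k + η := by
    have : ∀ c : Fin k, (if c = i then (1 + η) else 1) = 1 + if c = i then η else 0 := by
      intro c; split_ifs <;> ring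
    simp only [this, Finset.sum_add_distrib]
    simp
  calc ((Finset.univ.filter (fun σ : Fin n → Fin k => ¬ (cnt σ i : ℝ) ≤ x)).card : ℝ)
      = ∑ σ ∈ Finset.univ.filter (fun σ : Fin n → Fin k => ¬ (cnt σ i : ℝ) ≤ x), (1 : ℝ) := by simp
    _ ≤ ∑ σ ∈ Finset.univ.filter (fun σ : Fin n → Fin k => ¬ (cnt σ i : ℝ) ≤ x),
          Real.exp (-(s * x)) * ∏ v, (if σ v = i then (1 + η) else 1) := by
        refine Finset.sum_le_sum fun σ hσ => ?_
        have h1 := (Finset.mem_filter.1 hσ).2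
        push Not at h1
        rw [hprod, ← Real.exp_add, Real.one_le_exp_iff]
        nlinarith
    _ ≤ ∑ σ : Fin n → Fin k,
          Real.exp (-(s * x)) * ∏ v, (if σ v = i then (1 + η) else 1) :=
        Finset.sum_le_sum_of_subset_of_nonneg (Finset.filter_subset _ _)
          fun σ _ _ => by rw [hprod]; positivity
    _ = Real.exp (-(s * x)) * (k + η) ^ n := by
        rw [← Finset.mul_sum, sum_prod_fun (fun c : Fin k => if c = i then (1 + η) else 1), hsum]
    _ = (k : ℝ) ^ n * (Real.exp (-(s * x)) * (η / k + 1) ^ n) := by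
        rw [show (k : ℝ) + η = k * (η / k + 1) by field_simp; ring, mul_pow]; ring
    _ ≤ (k : ℝ) ^ n * (Real.exp (-(s * x)) * Real.exp (n * (η / k))) := by
        rw [Real.exp_nat_mul]
        gcongr
        exact Real.add_one_le_exp _
    _ = _ := by
        rw [← Real.exp_add]
        congr 2
        rw [hx]; field_simp; ring

theorem card_balanced_ge {k : ℕ} (hk : 0 < k) {η : ℝ} (hη : 0 < η) :
    ∀ᶠ n : ℕ in atTop, (k : ℝ) ^ n / 2 ≤ ((balancedColorings n k η).card : ℝ) := by
  have hk' : (0 : ℝ) < k := by exact_mod_cast hk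
  set γ : ℝ := ((1 + η) * Real.log (1 + η) - η) / k with hγ
  have hγ0 : 0 < γ := by
    refine div_pos ?_ hk'
    have h1 := Real.log_lt_sub_one_of_pos (x := (1 + η)⁻¹) (by positivity)
      (by rw [Ne, inv_eq_one]; linarith)
    rw [Real.log_inv] at h1
    have h2 : (1 + η) * (-Real.log (1 + η)) < (1 + η) * ((1 + η)⁻¹ - 1) :=
      mul_lt_mul_of_pos_left h1 (by linarith)
    have h3 : (1 + η) * ((1 + η)⁻¹ - 1) = -η := by field_simp; ring
    linarith
  have hlim : Tendsto (fun n : ℕ => (k : ℝ) * Real.exp (-(γ * n))) atTop (nhds ((k : ℝ) * 0)) := by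
    refine Tendsto.const_mul _ (Real.tendsto_exp_neg_atTop_nhds_zero.comp ?_)
    exact Tendsto.const_mul_atTop hγ0 tendsto_natCast_atTop_atTop
  rw [mul_zero] at hlim
  filter_upwards [hlim.eventually (ge_mem_nhds (show (0 : ℝ) < 1 / 2 by norm_num))] with n hn
  have hcompl : ((Finset.univ.filter (fun σ : Fin n → Fin k =>
      ¬ ∀ i, (cnt σ i : ℝ) ≤ (1 + η) * n / k)).card : ℝ)
        ≤ ∑ i : Fin k, (k : ℝ) ^ n * Real.exp (-(γ * n)) := by
    have hsub : Finset.univ.filter (fun σ : Fin n → Fin k =>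
        ¬ ∀ i, (cnt σ i : ℝ) ≤ (1 + η) * n / k) ⊆ Finset.univ.biUnion (fun i =>
          Finset.univ.filter (fun σ : Fin n → Fin k => ¬ (cnt σ i : ℝ) ≤ (1 + η) * n / k)) := by
      intro σ hσ
      have h1 := (Finset.mem_filter.1 hσ).2
      rw [not_forall] at h1
      obtain ⟨i, hi⟩ := h1
      exact Finset.mem_biUnion.2 ⟨i, Finset.mem_univ _, Finset.mem_filter.2 ⟨Finset.mem_univ _, hi⟩⟩
    have h2 : ((Finset.univ.filter (fun σ : Fin n → Fin k =>
        ¬ ∀ i, (cnt σ i : ℝ) ≤ (1 + η) * n / k)).card : ℝ) ≤ ∑ i : Fin k, ((Finset.univ.filter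
          (fun σ : Fin n → Fin k => ¬ (cnt σ i : ℝ) ≤ (1 + η) * n / k)).card : ℝ) := by
      exact_mod_cast (Finset.card_le_card hsub).trans Finset.card_biUnion_le
    exact h2.trans (Finset.sum_le_sum fun i _ => card_unbalanced_le hk hη i)
  have htot : ((balancedColorings n k η).card : ℝ) + ((Finset.univ.filter
      (fun σ : Fin n → Fin k => ¬ ∀ i, (cnt σ i : ℝ) ≤ (1 + η) * n / k)).card : ℝ)
        = (k : ℝ) ^ n := by
    have := Finset.card_filter_add_card_filter_not (s := (Finset.univ : Finset (Fin n → Fin k)))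
      (fun σ : Fin n → Fin k => ∀ i, (cnt σ i : ℝ) ≤ (1 + η) * n / k)
    rw [Finset.card_univ, Fintype.card_fun, Fintype.card_fin, Fintype.card_fin] at this
    unfold balancedColorings
    exact_mod_cast this
  simp only [Finset.sum_const, Finset.card_univ, Fintype.card_fin, nsmul_eq_mul] at hcompl
  have h3 : (k : ℝ) ^ n * ((k : ℝ) * Real.exp (-(γ * n))) ≤ (k : ℝ) ^ n * (1 / 2) :=
    mul_le_mul_of_nonneg_left hn (by positivity)
  linarith

/-- The edge probability `d (r-1)! / n^(r-1)`. -/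
noncomputable def edgeProb (r : ℕ) (d : ℝ) (n : ℕ) : ℝ :=
  d * ((r - 1).factorial : ℝ) / (n : ℝ) ^ (r - 1)

theorem edgeProb_tendsto {r : ℕ} (hr : 3 ≤ r) (d : ℝ) :
    Tendsto (edgeProb r d) atTop (nhds 0) := by
  have := tendsto_const_div_pow (d * ((r - 1).factorial : ℝ)) (r - 1) (by omega)
  exact this.comp tendsto_natCast_atTop_atTop

theorem eventually_poly_le_exp (C : ℝ) (m : ℕ) {γ : ℝ} (hγ : 0 < γ) :
    ∀ᶠ n : ℕ in atTop, C * ((n : ℝ) + 1) ^ m ≤ Real.exp (n * γ) := by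
  have h1 : Tendsto (fun x : ℝ => C * Real.exp γ * (x ^ m * Real.exp (-γ * x))) atTop
      (nhds (C * Real.exp γ * 0)) := by
    refine Tendsto.const_mul _ ?_
    have := tendsto_rpow_mul_exp_neg_mul_atTop_nhds_zero m γ hγ
    simpa using this
  rw [mul_zero] at h1
  have h2 : Tendsto (fun n : ℕ => (n : ℝ) + 1) atTop atTop :=
    tendsto_atTop_add_const_right _ _ tendsto_natCast_atTop_atTop
  filter_upwards [(h1.comp h2).eventually (ge_mem_nhds (show (0 : ℝ) < 1 by norm_num))] with n hn
  simp only [Function.comp] at hn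
  have h3 : Real.exp γ * Real.exp (-γ * (n + 1)) * Real.exp (n * γ) = 1 := by
    rw [← Real.exp_add, ← Real.exp_add]
    simp only [Real.exp_eq_one_iff]; ring
  calc C * ((n : ℝ) + 1) ^ m
      = (C * Real.exp γ * (((n : ℝ) + 1) ^ m * Real.exp (-γ * (n + 1)))) * Real.exp (n * γ) := by
        linear_combination (-(C * ((n : ℝ) + 1) ^ m)) * h3
    _ ≤ 1 * Real.exp (n * γ) := mul_le_mul_of_nonneg_right hn (Real.exp_pos _).le
    _ = _ := one_mul _

theorem sum_pairs {n : ℕ} {β : Type*} [Fintype β] (g : (Fin n → β × β) → ℝ) :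
    ∑ σ : Fin n → β, ∑ τ : Fin n → β, g (fun v => (σ v, τ v)) = ∑ f, g f := by
  rw [← Fintype.sum_prod_type' (f := fun σ τ : Fin n → β => g (fun v => (σ v, τ v)))]
  refine Fintype.sum_bijective (fun x : (Fin n → β) × (Fin n → β) => fun v => (x.1 v, x.2 v))
    ⟨fun x y h => ?_, fun f => ⟨(fun v => (f v).1, fun v => (f v).2), rfl⟩⟩ _ _ fun _ => rfl
  have h1 : ∀ v, (x.1 v, x.2 v) = (y.1 v, y.2 v) := congrFun h
  simp only [Prod.mk.injEq] at h1
  exact Prod.ext (funext fun v => (h1 v).1) (funext fun v => (h1 v).2)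

theorem sum_pairs_le {n : ℕ} {β : Type*} [Fintype β] (S : Finset (Fin n → β))
    (g : (Fin n → β × β) → ℝ) (hg : ∀ f, 0 ≤ g f) :
    ∑ σ ∈ S, ∑ τ ∈ S, g (fun v => (σ v, τ v)) ≤ ∑ f, g f := by
  rw [← sum_pairs]
  calc ∑ σ ∈ S, ∑ τ ∈ S, g (fun v => (σ v, τ v))
      ≤ ∑ σ ∈ S, ∑ τ : Fin n → β, g (fun v => (σ v, τ v)) :=
        Finset.sum_le_sum fun σ _ => Finset.sum_le_sum_of_subset_of_nonneg
          (Finset.subset_univ _) fun τ _ _ => hg (fun v => (σ v, τ v))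
    _ ≤ ∑ σ : Fin n → β, ∑ τ : Fin n → β, g (fun v => (σ v, τ v)) := by
        refine Finset.sum_le_sum_of_subset_of_nonneg (Finset.subset_univ S) ?_
        intro σ _ _
        exact Finset.sum_nonneg fun τ _ => hg _

/-- A balanced proper `k`-coloring exists with probability that is at worst exponentially small,
with a tiny rate. -/
theorem prob_balanced_ge {r k : ℕ} (hr : 3 ≤ r) (hk : 0 < k) {d η θ : ℝ}
    (hd : 0 < d) (hη : 0 < η) (hL : 4 ≤ Real.log k) (hθL : 2 ≤ θ * Real.log k)
    (hΛ : (1 + η) ^ r * (d / r) ≤ (1 - θ) * Real.log k * (k : ℝ) ^ (r - 1)) :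
    ∀ᶠ n : ℕ in atTop, Real.exp (-(n * (2 * (Real.log k * Real.exp 6 / (k : ℝ) ^ 2)))) ≤
      Pr (edgeProb r d n) (edgeCandidates n r)
        (fun E => ∃ σ ∈ balancedColorings n k η, ProperColoring E σ) := by
  have hk' : (0 : ℝ) < k := by exact_mod_cast hk
  set δ := Real.log k * Real.exp 6 / (k : ℝ) ^ 2 with hδ
  have hδ0 : 0 < δ := by
    have : 0 < Real.log k := by linarith
    positivity
  have hη1 : 0 < η / (1 + η) := by positivity
  filter_upwards [eventually_gt_atTop 0, card_balanced_ge hk hη,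
    (edgeProb_tendsto hr d).eventually (ge_mem_nhds hη1),
    eventually_poly_le_exp 4 (Fintype.card (Fin k × Fin k)) hδ0] with n hn hS hpη hpoly
  set p := edgeProb r d n with hp
  have hp0 : 0 ≤ p := by rw [hp, edgeProb]; positivity
  rw [le_div_iff₀ (by linarith)] at hpη
  have hp1 : p < 1 := by nlinarith
  have hinv : (1 - p)⁻¹ ≤ Real.exp ((1 + η) * p) := by
    have hq : 0 < 1 - p := by linarith
    have h1 : (1 - p)⁻¹ ≤ (1 + η) * p + 1 := by
      rw [inv_le_iff_one_le_mul₀ hq]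
      nlinarith
    exact h1.trans (Real.add_one_le_exp _)
  set S := balancedColorings n k η with hSdef
  have h2 := second_moment_coloring (r := r) hp0 hp1 S
  set P := Pr p (edgeCandidates n r) (fun E => ∃ σ ∈ S, ProperColoring E σ) with hP
  set B := Real.exp (n * δ) * (k : ℝ) ^ (2 * n) with hB
  have hsum : (∑ σ ∈ S, ∑ τ ∈ S, ((1 - p)⁻¹) ^ (monoEdges r (fun v => (σ v, τ v))).card)
      ≤ B * ((n : ℝ) + 1) ^ Fintype.card (Fin k × Fin k) := by
    set g : (Fin n → Fin k × Fin k) → ℝ := fun f => B * ∏ v, ((cnt f (f v) : ℝ) / n) with hg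
    have hg0 : ∀ f, 0 ≤ g f := fun f =>
      mul_nonneg (by positivity) (Finset.prod_nonneg fun _ _ => by positivity)
    calc (∑ σ ∈ S, ∑ τ ∈ S, ((1 - p)⁻¹) ^ (monoEdges r (fun v => (σ v, τ v))).card)
        ≤ ∑ σ ∈ S, ∑ τ ∈ S, g (fun v => (σ v, τ v)) := by
          refine Finset.sum_le_sum fun σ hσ => Finset.sum_le_sum fun τ _ => ?_
          refine overlap_bound hr hn hk hd hη.le hL hθL hΛ hp hp1 hinv _ fun c => ?_
          refine le_trans ?_ (mem_balancedColorings.1 hσ c.1)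
          have : cnt (fun v => (σ v, τ v)) c ≤ cnt σ c.1 := by
            refine Finset.card_le_card fun v hv => ?_
            simp only [Finset.mem_filter, Finset.mem_univ, true_and] at hv ⊢
            rw [← hv]
          exact_mod_cast this
      _ ≤ ∑ f, g f := sum_pairs_le S g hg0
      _ ≤ B * ((n : ℝ) + 1) ^ Fintype.card (Fin k × Fin k) := by
          rw [hg, ← Finset.mul_sum]
          exact mul_le_mul_of_nonneg_left (sum_types_le hn) (by positivity)
  have hP0 : 0 ≤ P := Pr_nonneg hp0 hp1.le _
  have h3 : ((k : ℝ) ^ n / 2) ^ 2 ≤ B * ((n : ℝ) + 1) ^ Fintype.card (Fin k × Fin k) * P :=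
    (pow_le_pow_left₀ (by positivity) hS 2).trans
      (h2.trans (mul_le_mul_of_nonneg_right hsum hP0))
  have h4 : (1 : ℝ) ≤ Real.exp (n * δ) * (4 * ((n : ℝ) + 1) ^ Fintype.card (Fin k × Fin k)) * P := by
    have hkn : (0 : ℝ) < (k : ℝ) ^ (2 * n) := by positivity
    have h5 : ((k : ℝ) ^ n / 2) ^ 2 = (k : ℝ) ^ (2 * n) / 4 := by
      rw [div_pow, ← pow_mul, mul_comm n 2]; norm_num
    rw [h5, hB] at h3
    refine le_of_mul_le_mul_left ?_ hkn
    linarith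
  have h6 : (1 : ℝ) ≤ Real.exp (n * δ) * Real.exp (n * δ) * P := by
    refine h4.trans (mul_le_mul_of_nonneg_right ?_ hP0)
    exact mul_le_mul_of_nonneg_left hpoly (Real.exp_pos _).le
  rw [← Real.exp_add] at h6
  rw [Real.exp_neg, inv_le_iff_one_le_mul₀ (Real.exp_pos _)]
  refine h6.trans (le_of_eq ?_)
  rw [mul_comm]
  congr 2
  ring

/-! ### Deleting few vertices -/

/-- The least number of vertices whose deletion leaves a hypergraph for which some coloring from
`S` is proper; it has the junk value `0` when `S` is empty. -/
noncomputable def delNum {n k : ℕ} (S : Finset (Fin n → Fin k)) (E : Finset (Finset (Fin n))) : ℕ :=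
  sInf {m | ∃ W : Finset (Fin n), W.card = m ∧
    ∃ σ ∈ S, ProperColoring (E.filter (fun e => Disjoint e W)) σ}

/-- A vertex of `e`, used to distribute the edges over `n` blocks; `v₀` is a default. -/
noncomputable def pickVertex {n : ℕ} (v₀ : Fin n) (e : Finset (Fin n)) : Fin n :=
  if h : e.Nonempty then h.choose else v₀

theorem pickVertex_mem {n : ℕ} (v₀ : Fin n) {e : Finset (Fin n)} (h : e.Nonempty) :
    pickVertex v₀ e ∈ e := by
  rw [pickVertex, dif_pos h]; exact h.choose_spec

theorem card_of_mem_candidates {n r : ℕ} {e : Finset (Fin n)} (h : e ∈ edgeCandidates n r) :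
    e.card = r := (Finset.mem_filter.1 h).2

theorem nonempty_of_mem_candidates {n r : ℕ} (hr : 3 ≤ r) {e : Finset (Fin n)}
    (h : e ∈ edgeCandidates n r) : e.Nonempty :=
  Finset.card_pos.1 (by rw [card_of_mem_candidates h]; omega)

theorem delNum_spec {n k r : ℕ} (hr : 3 ≤ r) {S : Finset (Fin n → Fin k)} (hS : S.Nonempty)
    {E : Finset (Finset (Fin n))} (hE : E ⊆ edgeCandidates n r) :
    ∃ W : Finset (Fin n), W.card = delNum S E ∧
      ∃ σ ∈ S, ProperColoring (E.filter (fun e => Disjoint e W)) σ := by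
  obtain ⟨σ, hσ⟩ := hS
  have : delNum S E ∈ {m | ∃ W : Finset (Fin n), W.card = m ∧
      ∃ σ ∈ S, ProperColoring (E.filter (fun e => Disjoint e W)) σ} := by
    refine Nat.sInf_mem ⟨_, Finset.univ, rfl, σ, hσ, fun e he => ?_⟩
    obtain ⟨he1, he2⟩ := Finset.mem_filter.1 he
    obtain ⟨v, hv⟩ := nonempty_of_mem_candidates hr (hE he1)
    exact absurd (Finset.mem_univ v) (Finset.disjoint_left.1 he2 hv)
  exact this

theorem delNum_le {n k : ℕ} {S : Finset (Fin n → Fin k)} {E : Finset (Finset (Fin n))}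
    (W : Finset (Fin n)) {σ : Fin n → Fin k} (hσ : σ ∈ S)
    (h : ProperColoring (E.filter (fun e => Disjoint e W)) σ) : delNum S E ≤ W.card :=
  Nat.sInf_le ⟨W, rfl, σ, hσ, h⟩

/-- Changing edges of one block changes `delNum` by at most `1`: all these edges contain `v`, and it
suffices to delete `v` in addition. -/
theorem delNum_lipschitz {n k r : ℕ} (hr : 3 ≤ r) {S : Finset (Fin n → Fin k)} (hS : S.Nonempty)
    (v₀ v : Fin n) {A B : Finset (Finset (Fin n))} (hA : A ⊆ edgeCandidates n r)
    (hB : B ⊆ edgeCandidates n r)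
    (hAB : ∀ e, pickVertex v₀ e ≠ v → (e ∈ A ↔ e ∈ B)) : delNum S A ≤ delNum S B + 1 := by
  obtain ⟨W, hW, σ, hσ, hprop⟩ := delNum_spec hr hS hB
  refine (delNum_le (insert v W) hσ fun e he => ?_).trans
    ((Finset.card_insert_le _ _).trans (by rw [hW]))
  obtain ⟨he1, he2⟩ := Finset.mem_filter.1 he
  rw [Finset.disjoint_insert_right] at he2
  refine hprop e (Finset.mem_filter.2 ⟨(hAB e fun h => he2.1 ?_).1 he1, he2.2⟩)
  rw [← h]
  exact pickVertex_mem v₀ (nonempty_of_mem_candidates hr (hA he1))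

/-- If a proper coloring from `S` exists with probability at least `exp (-ρ n)`, then with very
high probability deleting at most `2 √(2ρ) n` vertices suffices to get one. -/
theorem prob_deletion {n k r : ℕ} (hr : 3 ≤ r) (hn : 0 < n) {p ρ : ℝ} (hp : 0 ≤ p) (hp1 : p ≤ 1)
    (hρ : 0 ≤ ρ) (S : Finset (Fin n → Fin k))
    (hS : Real.exp (-(n * ρ)) ≤
      Pr p (edgeCandidates n r) (fun E => ∃ σ ∈ S, ProperColoring E σ)) :
    Pr p (edgeCandidates n r) (fun E => ¬ ∃ W : Finset (Fin n), (W.card : ℝ) ≤ 2 * √(2 * ρ) * n ∧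
      ∃ σ ∈ S, ProperColoring (E.filter (fun e => Disjoint e W)) σ) ≤ Real.exp (-(n * ρ)) := by
  have hn' : (0 : ℝ) < n := by exact_mod_cast hn
  have hSne : S.Nonempty := by
    by_contra hcon
    rw [Finset.not_nonempty_iff_eq_empty] at hcon
    subst hcon
    have h1 := Real.exp_pos (-(n * ρ))
    simp only [Finset.notMem_empty, false_and, exists_false] at hS
    simp only [Pr, if_false, Ex_const] at hS
    linarith
  set t : ℝ := √(2 * ρ) * n with ht
  have ht2 : t ^ 2 / (2 * n) = n * ρ := by
    rw [ht, mul_pow, Real.sq_sqrt (by positivity)]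
    field_simp
  have hconc := concentration hp hp1 hn (pickVertex (⟨0, hn⟩ : Fin n)) (edgeCandidates n r)
    (fun E => (delNum S E : ℝ)) (fun v A hA B hB hAB => by
      exact_mod_cast delNum_lipschitz hr hSne _ v hA hB hAB) (t := t) (by positivity) (by
      rw [ht2]
      refine hS.trans (Pr_mono hp hp1 fun E _ hE => ?_)
      obtain ⟨σ, hσ, hprop⟩ := hE
      have : delNum S E ≤ 0 := delNum_le ∅ hσ fun e he => hprop e (Finset.mem_filter.1 he).1
      exact_mod_cast this)
  rw [ht2] at hconc
  refine le_trans (Pr_mono hp hp1 fun E hE hbad => ?_) hconc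
  by_contra hcon
  push Not at hcon
  obtain ⟨W, hW, hσ⟩ := delNum_spec hr hSne hE
  refine hbad ⟨W, ?_, hσ⟩
  rw [hW]
  linarith

/-! ### Small vertex sets are sparse -/

theorem choose_le_exp {n s : ℕ} (hs : 0 < s) (hn : 0 < n) :
    (n.choose s : ℝ) ≤ Real.exp (s * (1 + Real.log (n / s))) := by
  have hs' : (0 : ℝ) < s := by exact_mod_cast hs
  have hn' : (0 : ℝ) < n := by exact_mod_cast hn
  have h1 : (n.choose s : ℝ) ≤ (n : ℝ) ^ s / (s.factorial : ℝ) := Nat.choose_le_pow_div s n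
  have h2 : (s : ℝ) ^ s / (s.factorial : ℝ) ≤ Real.exp s := Real.pow_div_factorial_le_exp _ hs'.le s
  have h3 : Real.exp (s * (1 + Real.log (n / s))) = Real.exp s * ((n : ℝ) / s) ^ s := by
    rw [mul_add, Real.exp_add, mul_one, Real.exp_nat_mul (Real.log _), Real.exp_log (by positivity)]
  rw [h3]
  calc (n.choose s : ℝ) ≤ (n : ℝ) ^ s / (s.factorial : ℝ) := h1
    _ = (s : ℝ) ^ s / (s.factorial : ℝ) * ((n : ℝ) / s) ^ s := by
        rw [div_pow]; field_simp
    _ ≤ _ := mul_le_mul_of_nonneg_right h2 (by positivity)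

/-- With probability `1 - O(n⁻²)` every nonempty set `W` of at most `ς n` vertices spans fewer
than `c |W|` edges. -/
theorem prob_sparse {n r c : ℕ} (hr : 3 ≤ r) (hn : 0 < n) {d ς : ℝ} (hd : 0 < d) (hς : 0 < ς)
    (hc2 : 2 ≤ c) (hc : 2 + Real.log (1 / ς) ≤ c)
    (hcd : Real.exp 2 * d * ς ^ (r - 1) ≤ c * r) (hp1 : edgeProb r d n ≤ 1) :
    Pr (edgeProb r d n) (edgeCandidates n r) (fun E => ∃ W : Finset (Fin n), W.Nonempty ∧
      (W.card : ℝ) ≤ ς * n ∧ (c : ℝ) * W.card ≤ ((E.filter (fun e => e ⊆ W)).card : ℝ))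
      ≤ 6 / (ς ^ 3 * (n : ℝ) ^ 2) := by
  have hn' : (0 : ℝ) < n := by exact_mod_cast hn
  have hr' : (0 : ℝ) < r := by exact_mod_cast (by omega : 0 < r)
  have hc' : (0 : ℝ) < c := by exact_mod_cast (by omega : 0 < c)
  have hc2' : (2 : ℝ) ≤ c := by exact_mod_cast hc2
  have hp0 : 0 ≤ edgeProb r d n := by unfold edgeProb; positivity
  obtain ⟨m, hm⟩ : ∃ m, r = m + 3 := ⟨r - 3, by omega⟩
  set T := (Finset.Icc 1 n).filter (fun s : ℕ => (s : ℝ) ≤ ς * n) with hT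
  have hone : ∀ s ∈ T, ∀ W ∈ Finset.powersetCard s (Finset.univ : Finset (Fin n)),
      Pr (edgeProb r d n) (edgeCandidates n r)
        (fun E => (c : ℝ) * s ≤ ((E.filter (fun e => e ⊆ W)).card : ℝ))
      ≤ Real.exp (-(s * (1 + Real.log (n / s))) + -(s : ℝ) + 3 * Real.log (s / (ς * n))) := by
    intro s hs W hW
    obtain ⟨hs1, hs2⟩ := Finset.mem_filter.1 hs
    have hs0 : 0 < s := (Finset.mem_Icc.1 hs1).1
    have hs' : (0 : ℝ) < s := by exact_mod_cast hs0
    have hs1' : (1 : ℝ) ≤ s := by exact_mod_cast hs0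
    have hWc : W.card = s := (Finset.mem_powersetCard.1 hW).2
    set B := Finset.powersetCard r W with hB
    have hBU : B ⊆ edgeCandidates n r := fun e he =>
      Finset.mem_filter.2 ⟨Finset.mem_univ _, (Finset.mem_powersetCard.1 he).2⟩
    have hBc : (B.card : ℝ) ≤ (s : ℝ) ^ r / (r.factorial : ℝ) := by
      rw [hB, Finset.card_powersetCard, hWc]; exact Nat.choose_le_pow_div r s
    -- `t` is the ratio between the threshold `c s` and the expected number of edges inside `W`
    set t : ℝ := c * r / d * ((n : ℝ) / s) ^ (r - 1) with ht
    have ht0 : 0 < t := by positivity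
    set ℓ := Real.log (ς * n / s) with hℓ
    have hℓ0 : 0 ≤ ℓ := Real.log_nonneg (by rw [le_div_iff₀ hs']; linarith)
    have hlogt : 2 + 2 * ℓ ≤ Real.log t := by
      have h1 : t = (c * r / (d * ς ^ (r - 1))) * (ς * n / s) ^ (r - 1) := by
        rw [ht, mul_div_assoc ς, mul_pow]; field_simp
      rw [h1, Real.log_mul (by positivity) (by positivity), Real.log_pow]
      have h2 : 2 ≤ Real.log (c * r / (d * ς ^ (r - 1))) := by
        rw [Real.le_log_iff_exp_le (by positivity), le_div_iff₀ (by positivity)]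
        linarith
      have h3 : (2 : ℝ) ≤ ((r - 1 : ℕ) : ℝ) := by exact_mod_cast (by omega : 2 ≤ r - 1)
      have h4 : 2 * ℓ ≤ ((r - 1 : ℕ) : ℝ) * ℓ := mul_le_mul_of_nonneg_right h3 hℓ0
      linarith
    refine (Pr_chernoff hp0 hp1 hBU (s := Real.log t) (by linarith) ((c : ℝ) * s)
      (fun E hE h => ⟨_, Finset.filter_subset _ _, fun e he => ?_, h⟩)).trans (Real.exp_le_exp.2 ?_)
    · obtain ⟨h1, h2⟩ := Finset.mem_filter.1 he
      exact Finset.mem_powersetCard.2 ⟨h2, card_of_mem_candidates (hE h1)⟩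
    rw [Real.exp_log ht0]
    have hmean : edgeProb r d n * t * B.card ≤ c * s := by
      calc edgeProb r d n * t * B.card
          ≤ edgeProb r d n * t * ((s : ℝ) ^ r / (r.factorial : ℝ)) :=
            mul_le_mul_of_nonneg_left hBc (by positivity)
        _ = c * s := by
            have hfac : (r.factorial : ℝ) = r * ((r - 1).factorial : ℝ) := by
              rw [hm, Nat.add_sub_assoc (by norm_num), Nat.factorial_succ (m + 2)]
              push_cast; ring
            have hpow : (s : ℝ) ^ r = s ^ (r - 1) * s := by
              rw [← pow_succ]; congr 1; omega
            have hf0 : ((r - 1).factorial : ℝ) ≠ 0 := by positivity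
            rw [edgeProb, ht, hfac, hpow, div_pow]
            field_simp
    have hlogns : Real.log (n / s) = Real.log (1 / ς) + ℓ := by
      rw [hℓ, ← Real.log_mul (by positivity) (by positivity)]
      congr 1; field_simp
    have hinvℓ : Real.log (s / (ς * n)) = -ℓ := by
      rw [hℓ, ← Real.log_inv]; congr 1; rw [inv_div]
    rw [hlogns, hinvℓ]
    -- it remains to bound `s c (log t - 1)` from below by `s (2 + log (1 / ς) + ℓ) + 3 ℓ`
    have h5 : c * (1 + 2 * ℓ) ≤ c * (Real.log t - 1) := mul_le_mul_of_nonneg_left (by linarith) hc'.le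
    have h6 : 2 * (2 * ℓ) ≤ c * (2 * ℓ) := mul_le_mul_of_nonneg_right hc2' (by linarith)
    have h7 : 2 + Real.log (1 / ς) + 4 * ℓ ≤ c * (Real.log t - 1) := by linarith
    have h8 : s * (2 + Real.log (1 / ς) + 4 * ℓ) ≤ s * (c * (Real.log t - 1)) :=
      mul_le_mul_of_nonneg_left h7 hs'.le
    have h9 : 3 * ℓ ≤ s * (3 * ℓ) := le_mul_of_one_le_left (by linarith) hs1'
    linarith
  have hbound : ∀ s ∈ T, ∑ W ∈ Finset.powersetCard s (Finset.univ : Finset (Fin n)),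
      Pr (edgeProb r d n) (edgeCandidates n r)
        (fun E => (c : ℝ) * s ≤ ((E.filter (fun e => e ⊆ W)).card : ℝ)) ≤ 6 / (ς * n) ^ 3 := by
    intro s hs
    have hs0 : 0 < s := (Finset.mem_Icc.1 (Finset.mem_filter.1 hs).1).1
    have hs' : (0 : ℝ) < s := by exact_mod_cast hs0
    refine (Finset.sum_le_sum (hone s hs)).trans ?_
    rw [Finset.sum_const, Finset.card_powersetCard, Finset.card_univ, Fintype.card_fin,
      nsmul_eq_mul]
    refine (mul_le_mul_of_nonneg_right (choose_le_exp hs0 hn) (Real.exp_pos _).le).trans ?_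
    rw [← Real.exp_add]
    have h1 : (s : ℝ) * (1 + Real.log (n / s)) + (-(s * (1 + Real.log (n / s))) + -(s : ℝ)
        + 3 * Real.log (s / (ς * n))) = -(s : ℝ) + (3 : ℕ) * Real.log (s / (ς * n)) := by
      push_cast; ring
    rw [h1, Real.exp_add, Real.exp_nat_mul, Real.exp_log (by positivity), Real.exp_neg, div_pow]
    have h2 : (s : ℝ) ^ 3 / ((3 : ℕ).factorial : ℝ) ≤ Real.exp s :=
      Real.pow_div_factorial_le_exp _ hs'.le 3
    have h3 : (s : ℝ) ^ 3 ≤ 6 * Real.exp s := by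
      norm_num [Nat.factorial] at h2; linarith
    rw [← mul_div_assoc]
    refine div_le_div_of_nonneg_right ?_ (by positivity)
    rw [inv_mul_le_iff₀ (Real.exp_pos _)]
    linarith
  calc Pr (edgeProb r d n) (edgeCandidates n r) (fun E => ∃ W : Finset (Fin n), W.Nonempty ∧
      (W.card : ℝ) ≤ ς * n ∧ (c : ℝ) * W.card ≤ ((E.filter (fun e => e ⊆ W)).card : ℝ))
      ≤ Pr (edgeProb r d n) (edgeCandidates n r) (fun E => ∃ s ∈ T,
          ∃ W ∈ Finset.powersetCard s (Finset.univ : Finset (Fin n)),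
            (c : ℝ) * s ≤ ((E.filter (fun e => e ⊆ W)).card : ℝ)) := by
        refine Pr_mono hp0 hp1 fun E _ => ?_
        rintro ⟨W, hWne, hWs, hWE⟩
        refine ⟨W.card, Finset.mem_filter.2 ⟨Finset.mem_Icc.2 ⟨Finset.card_pos.2 hWne, ?_⟩, hWs⟩,
          W, Finset.mem_powersetCard.2 ⟨Finset.subset_univ _, rfl⟩, hWE⟩
        simpa using Finset.card_le_univ W
    _ ≤ ∑ s ∈ T, Pr (edgeProb r d n) (edgeCandidates n r) (fun E =>
          ∃ W ∈ Finset.powersetCard s (Finset.univ : Finset (Fin n)),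
            (c : ℝ) * s ≤ ((E.filter (fun e => e ⊆ W)).card : ℝ)) :=
        Pr_exists_le hp0 hp1 T _
    _ ≤ ∑ s ∈ T, 6 / (ς * n) ^ 3 :=
        Finset.sum_le_sum fun s hs => (Pr_exists_le hp0 hp1 _ _).trans (hbound s hs)
    _ ≤ n * (6 / (ς * n) ^ 3) := by
        rw [Finset.sum_const, nsmul_eq_mul]
        refine mul_le_mul_of_nonneg_right ?_ (by positivity)
        have : T.card ≤ n := (Finset.card_filter_le _ _).trans (by simp)
        exact_mod_cast this
    _ = 6 / (ς ^ 3 * (n : ℝ) ^ 2) := by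
        field_simp

/-! ### Coloring the deleted vertices -/

/-- Greedy coloring: if all nonempty subsets of `W` span few edges, every subset has a vertex of
degree less than `r c`, and the vertices can be colored one after the other. -/
theorem degenerate_coloring {n r c : ℕ} (hr : 3 ≤ r) (hc : 0 < c) {E : Finset (Finset (Fin n))}
    (hE : E ⊆ edgeCandidates n r) (W : Finset (Fin n))
    (h : ∀ W' ⊆ W, W'.Nonempty → (E.filter (fun e => e ⊆ W')).card < c * W'.card) :
    ∃ g : Fin n → Fin (r * c), ∀ e ∈ E, e ⊆ W → ∃ v ∈ e, ∃ w ∈ e, g v ≠ g w := by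
  have hrc : 0 < r * c := Nat.mul_pos (by omega) hc
  induction hN : W.card generalizing W with
  | zero =>
    rw [Finset.card_eq_zero] at hN
    subst hN
    refine ⟨fun _ => ⟨0, hrc⟩, fun e he hsub => ?_⟩
    obtain ⟨v, hv⟩ := nonempty_of_mem_candidates hr (hE he)
    exact absurd (hsub hv) (Finset.notMem_empty v)
  | succ N ih =>
    have hne : W.Nonempty := Finset.card_pos.1 (by omega)
    set EW := E.filter (fun e => e ⊆ W) with hEW
    have hdeg : ∑ v ∈ W, (EW.filter (fun e => v ∈ e)).card = r * EW.card := by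
      have h1 : ∀ e ∈ EW, (W.filter (fun v => v ∈ e)).card = r := by
        intro e he
        obtain ⟨he1, he2⟩ := Finset.mem_filter.1 he
        rw [Finset.filter_mem_eq_inter, Finset.inter_eq_right.2 he2]
        exact card_of_mem_candidates (hE he1)
      have h2 := Finset.sum_card_bipartiteAbove_eq_sum_card_bipartiteBelow (s := W) (t := EW)
        (fun v e => v ∈ e)
      unfold Finset.bipartiteAbove Finset.bipartiteBelow at h2
      rw [h2, Finset.sum_congr rfl h1, Finset.sum_const, smul_eq_mul, mul_comm]
    have hlt : ∑ v ∈ W, (EW.filter (fun e => v ∈ e)).card < ∑ _v ∈ W, r * c := by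
      rw [hdeg, Finset.sum_const, smul_eq_mul]
      have := h W Finset.Subset.rfl hne
      calc r * EW.card < r * (c * W.card) := Nat.mul_lt_mul_of_pos_left this (by omega)
        _ = W.card * (r * c) := by ring
    obtain ⟨v, hvW, hv⟩ := Finset.exists_lt_of_sum_lt hlt
    obtain ⟨g, hg⟩ := ih (W.erase v)
      (fun W' hW' => h W' (hW'.trans (Finset.erase_subset _ _)))
      (by rw [Finset.card_erase_of_mem hvW]; omega)
    have hother : ∀ e : Finset (Fin n), ∃ w, e ∈ E → w ∈ e ∧ w ≠ v := by
      intro e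
      by_cases he : e ∈ E
      · have h3 : 0 < (e.erase v).card := by
          have h4 := Finset.pred_card_le_card_erase (a := v) (s := e)
          rw [card_of_mem_candidates (hE he)] at h4
          omega
        obtain ⟨w, hw⟩ := Finset.card_pos.1 h3
        exact ⟨w, fun _ => ⟨Finset.mem_of_mem_erase hw, Finset.ne_of_mem_erase hw⟩⟩
      · exact ⟨v, fun h => absurd h he⟩
    choose w hw using hother
    obtain ⟨x, hx⟩ : ∃ x, x ∉ (EW.filter (fun e => v ∈ e)).image (fun e => g (w e)) := by
      by_contra hcon
      push Not at hcon
      have h5 : (Finset.univ : Finset (Fin (r * c))).card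
          ≤ ((EW.filter (fun e => v ∈ e)).image (fun e => g (w e))).card :=
        Finset.card_le_card fun y _ => hcon y
      rw [Finset.card_univ, Fintype.card_fin] at h5
      have := h5.trans Finset.card_image_le
      omega
    refine ⟨Function.update g v x, fun e he hsub => ?_⟩
    by_cases hve : v ∈ e
    · refine ⟨v, hve, w e, (hw e he).1, ?_⟩
      rw [Function.update_self, Function.update_of_ne (hw e he).2]
      rintro rfl
      exact hx (Finset.mem_image.2 ⟨e, Finset.mem_filter.2
        ⟨Finset.mem_filter.2 ⟨he, hsub⟩, hve⟩, rfl⟩)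
    · obtain ⟨a, ha, b, hb, hab⟩ := hg e he (Finset.subset_erase.2 ⟨hsub, hve⟩)
      refine ⟨a, ha, b, hb, ?_⟩
      rwa [Function.update_of_ne (by rintro rfl; exact hve ha),
        Function.update_of_ne (by rintro rfl; exact hve hb)]

/-- A set of at most `q m` vertices can be cut into `q` pieces of at most `m` vertices each. -/
theorem exists_pieces {n : ℕ} (W : Finset (Fin n)) {m q : ℕ} (hq : 0 < q) (hW : W.card ≤ q * m) :
    ∃ pc : Fin n → Fin q, ∀ j, (W.filter (fun v => pc v = j)).card ≤ m := by
  have hidx : ∀ v : Fin n, ∃ i : ℕ, ∀ h : v ∈ W, i = (W.equivFin ⟨v, h⟩ : ℕ) := by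
    intro v
    by_cases h : v ∈ W
    · exact ⟨(W.equivFin ⟨v, h⟩ : ℕ), fun _ => rfl⟩
    · exact ⟨0, fun h' => absurd h' h⟩
  choose i hi using hidx
  have hlt : ∀ v ∈ W, i v / m < q := by
    intro v hv
    have h1 : i v < W.card := by rw [hi v hv]; exact Fin.is_lt _
    rw [mul_comm] at hW
    exact Nat.div_lt_of_lt_mul (h1.trans_le hW)
  refine ⟨fun v => ⟨i v / m % q, Nat.mod_lt _ hq⟩, fun j => ?_⟩
  rcases Nat.eq_zero_or_pos m with hm | hm
  · subst hm
    exact (Finset.card_filter_le _ _).trans (by simpa using hW)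
  have hmaps : ∀ v ∈ W.filter (fun v => (⟨i v / m % q, Nat.mod_lt _ hq⟩ : Fin q) = j),
      i v ∈ Finset.Ico (j * m) (j * m + m) := by
    intro v hv
    obtain ⟨h1, h2⟩ := Finset.mem_filter.1 hv
    have h3 : i v / m = j := by
      have := congrArg Fin.val h2
      simpa [Nat.mod_eq_of_lt (hlt v h1)] using this
    rw [Finset.mem_Ico, ← h3]
    constructor
    · exact Nat.div_mul_le_self _ _
    · have := Nat.lt_div_mul_add (a := i v) hm
      exact this
  have := Finset.card_le_card_of_injOn i hmaps (by
    intro u hu v hv huv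
    have hu' := (Finset.mem_filter.1 (Finset.mem_coe.1 hu)).1
    have hv' := (Finset.mem_filter.1 (Finset.mem_coe.1 hv)).1
    simp only [hi u hu', hi v hv'] at huv
    have := W.equivFin.injective (Fin.ext huv)
    exact congrArg Subtype.val this)
  simpa using this

/-- Combination of a balanced coloring of `V \ W` with a greedy coloring of the sparse set `W`,
the classes of the latter being cut into pieces of size at most `M`. -/
theorem combine_coloring {n r k c q M : ℕ} (hr : 3 ≤ r) (hc : 0 < c) (hq : 0 < q)
    {E : Finset (Finset (Fin n))} (hE : E ⊆ edgeCandidates n r) (W : Finset (Fin n))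
    (hWq : W.card ≤ q * M)
    (hsparse : ∀ W' ⊆ W, W'.Nonempty → (E.filter (fun e => e ⊆ W')).card < c * W'.card)
    (σ : Fin n → Fin k) (hσ : ProperColoring (E.filter (fun e => Disjoint e W)) σ)
    (hσM : ∀ i, cnt σ i ≤ M) :
    ∃ f : Fin n → Fin (k + r * c * q), ProperColoring E f ∧ ∀ i, cnt f i ≤ M := by
  obtain ⟨g, hg⟩ := degenerate_coloring hr hc hE W hsparse
  obtain ⟨pc, hpc⟩ := exists_pieces W hq hWq
  set f : Fin n → Fin (k + r * c * q) := fun v =>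
    if v ∈ W then Fin.natAdd k (finProdFinEquiv (g v, pc v)) else Fin.castAdd (r * c * q) (σ v)
    with hf
  have hfW : ∀ v ∈ W, f v = Fin.natAdd k (finProdFinEquiv (g v, pc v)) := fun v hv => by
    simp [hf, hv]
  have hfN : ∀ v, v ∉ W → f v = Fin.castAdd (r * c * q) (σ v) := fun v hv => by
    simp [hf, hv]
  have hne : ∀ (x : Fin k) (y : Fin (r * c * q)), Fin.castAdd (r * c * q) x ≠ Fin.natAdd k y := by
    intro x y hxy
    have := congrArg Fin.val hxy
    simp only [Fin.val_castAdd, Fin.val_natAdd] at this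
    have := x.is_lt
    omega
  refine ⟨f, fun e he => ?_, fun i => ?_⟩
  · by_cases h1 : e ⊆ W
    · obtain ⟨v, hv, w, hw, hvw⟩ := hg e he h1
      refine ⟨v, hv, w, hw, fun heq => hvw ?_⟩
      rw [hfW v (h1 hv), hfW w (h1 hw)] at heq
      have h2 := finProdFinEquiv.injective ((Fin.natAdd_injective _ _) heq)
      exact congrArg Prod.fst h2
    · obtain ⟨v, hv, hvW⟩ := Finset.not_subset.1 h1
      by_cases h2 : Disjoint e W
      · obtain ⟨a, ha, b, hb, hab⟩ := hσ e (Finset.mem_filter.2 ⟨he, h2⟩)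
        refine ⟨a, ha, b, hb, fun heq => hab ?_⟩
        rw [hfN a (Finset.disjoint_left.1 h2 ha), hfN b (Finset.disjoint_left.1 h2 hb)] at heq
        exact (Fin.castAdd_injective _ _) heq
      · obtain ⟨w, hw, hwW⟩ := Finset.not_disjoint_iff.1 h2
        refine ⟨v, hv, w, hw, ?_⟩
        rw [hfN v hvW, hfW w hwW]
        exact hne _ _
  · refine Fin.addCases (fun x => ?_) (fun y => ?_) i
    · refine le_trans (Finset.card_le_card fun v hv => ?_) (hσM x)
      simp only [Finset.mem_filter, Finset.mem_univ, true_and] at hv ⊢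
      by_cases hvW : v ∈ W
      · rw [hfW v hvW] at hv
        exact absurd hv.symm (hne _ _)
      · rw [hfN v hvW] at hv
        exact (Fin.castAdd_injective _ _) hv
    · refine le_trans (Finset.card_le_card fun v hv => ?_) (hpc (finProdFinEquiv.symm y).2)
      simp only [Finset.mem_filter, Finset.mem_univ, true_and] at hv ⊢
      by_cases hvW : v ∈ W
      · refine ⟨hvW, ?_⟩
        rw [hfW v hvW] at hv
        rw [← (Fin.natAdd_injective _ _) hv]
        simp
      · rw [hfN v hvW] at hv
        exact absurd hv (hne _ _)

/-! ### Edges meeting a small set in a given number of vertices -/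

theorem card_edges_meeting_le {n r j : ℕ} (hj : j ≤ r) {a : ℝ} (A : Finset (Fin n))
    (hA : (A.card : ℝ) ≤ a * n) :
    (((edgeCandidates n r).filter (fun e => (e ∩ A).card = j)).card : ℝ)
      ≤ (r.choose j : ℝ) * a ^ j * (n : ℝ) ^ r / (r.factorial : ℝ) := by
  have h1 : ((edgeCandidates n r).filter (fun e => (e ∩ A).card = j)).card
      ≤ (Finset.powersetCard j A ×ˢ Finset.powersetCard (r - j) (Finset.univ : Finset (Fin n))).card := by
    refine Finset.card_le_card_of_injOn (fun e => (e ∩ A, e \ A)) (fun e he => ?_) ?_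
    · obtain ⟨h2, h3⟩ := Finset.mem_filter.1 (Finset.mem_coe.1 he)
      refine Finset.mem_coe.2 (Finset.mem_product.2 ⟨Finset.mem_powersetCard.2
        ⟨Finset.inter_subset_right, h3⟩, Finset.mem_powersetCard.2 ⟨Finset.subset_univ _, ?_⟩⟩)
      have h4 := Finset.card_inter_add_card_sdiff e A
      have h5 := card_of_mem_candidates h2
      simp only
      omega
    · intro e _ e' _ hee
      simp only [Prod.mk.injEq] at hee
      rw [← Finset.sdiff_union_inter e A, ← Finset.sdiff_union_inter e' A, hee.1, hee.2]
  rw [Finset.card_product, Finset.card_powersetCard, Finset.card_powersetCard, Finset.card_univ,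
    Fintype.card_fin] at h1
  have h1' : (((edgeCandidates n r).filter (fun e => (e ∩ A).card = j)).card : ℝ)
      ≤ (A.card.choose j : ℝ) * (n.choose (r - j) : ℝ) := by exact_mod_cast h1
  refine h1'.trans ?_
  have h2 : (A.card.choose j : ℝ) ≤ (a * n) ^ j / (j.factorial : ℝ) :=
    (Nat.choose_le_pow_div j _).trans (by gcongr)
  have h3 : (n.choose (r - j) : ℝ) ≤ (n : ℝ) ^ (r - j) / ((r - j).factorial : ℝ) :=
    Nat.choose_le_pow_div _ _
  have h0 : 0 ≤ (a * n) ^ j / (j.factorial : ℝ) := le_trans (by positivity) h2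
  refine (mul_le_mul h2 h3 (by positivity) h0).trans (le_of_eq ?_)
  have h4 : (r.factorial : ℝ) = r.choose j * j.factorial * (r - j).factorial := by
    exact_mod_cast (Nat.choose_mul_factorial_mul_factorial hj).symm
  have h5 : (n : ℝ) ^ r = (n : ℝ) ^ j * (n : ℝ) ^ (r - j) := by
    rw [← pow_add]; congr 1; omega
  have h6 : (r.choose j : ℝ) ≠ 0 := by exact_mod_cast (Nat.choose_pos hj).ne'
  rw [h4, h5, mul_pow]
  field_simp

/-- With probability `1 - O(2ⁿ e^{-5n})`, no set of at most `a n` vertices meets too many edges in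
exactly `j` vertices: the threshold is ten times the expectation, and linear in `n` with a
constant at least `10`. -/
theorem prob_meeting {n r : ℕ} (hr : 3 ≤ r) (hn : 0 < n) {d a : ℝ} (hd : 0 < d) (ha0 : 0 ≤ a)
    (ha1 : a ≤ 1) (had : (r : ℝ) ≤ d * a ^ (r - 1)) (hp1 : edgeProb r d n ≤ 1) :
    Pr (edgeProb r d n) (edgeCandidates n r) (fun E => ∃ A : Finset (Fin n), ∃ j : ℕ,
      (A.card : ℝ) ≤ a * n ∧ 1 ≤ j ∧ j ≤ r - 1 ∧
        (10 * d / r) * (r.choose j : ℝ) * a ^ j * n ≤ ((E.filter (fun e => (e ∩ A).card = j)).card : ℝ))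
      ≤ r * ((2 : ℝ) ^ n * Real.exp (-(5 * n))) := by
  have hn' : (0 : ℝ) < n := by exact_mod_cast hn
  have hr' : (0 : ℝ) < r := by exact_mod_cast (by omega : 0 < r)
  have hp0 : 0 ≤ edgeProb r d n := by unfold edgeProb; positivity
  set κ : ℕ → ℝ := fun j => (10 * d / r) * (r.choose j : ℝ) * a ^ j with hκ
  have hone : ∀ j ∈ Finset.Icc 1 (r - 1), ∀ A ∈ (Finset.univ : Finset (Finset (Fin n))),
      Pr (edgeProb r d n) (edgeCandidates n r) (fun E => (A.card : ℝ) ≤ a * n ∧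
        κ j * n ≤ ((E.filter (fun e => (e ∩ A).card = j)).card : ℝ)) ≤ Real.exp (-(5 * n)) := by
    intro j hj A _
    rw [Finset.mem_Icc] at hj
    by_cases hA : (A.card : ℝ) ≤ a * n
    swap
    · simp only [hA, false_and, Pr, if_false, Ex_const]; positivity
    set B := (edgeCandidates n r).filter (fun e => (e ∩ A).card = j) with hB
    refine (Pr_chernoff hp0 hp1 (B := B) (U := edgeCandidates n r) (Finset.filter_subset _ _)
      (s := 1) zero_le_one (κ j * n)
      (fun E hE h => ⟨_, Finset.filter_subset _ _, fun e he => ?_, h.2⟩)).trans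
      (Real.exp_le_exp.2 ?_)
    · obtain ⟨h1, h2⟩ := Finset.mem_filter.1 he
      exact Finset.mem_filter.2 ⟨hE h1, h2⟩
    · have hBc := card_edges_meeting_le (r := r) (j := j) (by omega) A hA
      have hmean : edgeProb r d n * B.card ≤ κ j * n / 10 := by
        refine (mul_le_mul_of_nonneg_left hBc hp0).trans (le_of_eq ?_)
        obtain ⟨m, hm⟩ : ∃ m, r = m + 1 := ⟨r - 1, by omega⟩
        have hfac : (r.factorial : ℝ) = r * ((r - 1).factorial : ℝ) := by
          rw [hm, Nat.add_sub_cancel, Nat.factorial_succ]; push_cast; ring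
        have hpow : (n : ℝ) ^ r = n ^ (r - 1) * n := by
          rw [← pow_succ]; congr 1; omega
        have hf0 : ((r - 1).factorial : ℝ) ≠ 0 := by positivity
        rw [edgeProb, hfac, hpow, hκ]
        field_simp
      have hκ10 : 10 ≤ κ j := by
        have h1 : a ^ (r - 1) ≤ a ^ j := pow_le_pow_of_le_one ha0 ha1 hj.2
        have h2 : (1 : ℝ) ≤ (r.choose j : ℝ) := by
          exact_mod_cast Nat.choose_pos (by omega : j ≤ r)
        have h3 : (r : ℝ) ≤ d * a ^ j := had.trans (mul_le_mul_of_nonneg_left h1 hd.le)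
        have h4 : (r : ℝ) ≤ (r.choose j : ℝ) * (d * a ^ j) := by nlinarith
        have h5 : κ j = 10 * ((r.choose j : ℝ) * (d * a ^ j)) / r := by rw [hκ]; ring
        rw [h5, le_div_iff₀ hr']
        linarith
      have he : Real.exp 1 ≤ 3 := by linarith [Real.exp_one_lt_d9]
      have h6 : edgeProb r d n * Real.exp 1 * B.card ≤ 3 * (κ j * n / 10) := by
        have h7 : 0 ≤ edgeProb r d n * B.card := by positivity
        calc edgeProb r d n * Real.exp 1 * B.card = Real.exp 1 * (edgeProb r d n * B.card) := by ring
          _ ≤ 3 * (κ j * n / 10) := mul_le_mul he hmean h7 (by norm_num)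
      have h8 : 10 * n ≤ κ j * n := mul_le_mul_of_nonneg_right hκ10 hn'.le
      linarith
  calc _ ≤ Pr (edgeProb r d n) (edgeCandidates n r) (fun E => ∃ j ∈ Finset.Icc 1 (r - 1),
        ∃ A ∈ (Finset.univ : Finset (Finset (Fin n))), (A.card : ℝ) ≤ a * n ∧
          κ j * n ≤ ((E.filter (fun e => (e ∩ A).card = j)).card : ℝ)) := by
        refine Pr_mono hp0 hp1 fun E _ => ?_
        rintro ⟨A, j, hA, hj1, hj2, h⟩
        exact ⟨j, Finset.mem_Icc.2 ⟨hj1, hj2⟩, A, Finset.mem_univ _, hA, h⟩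
    _ ≤ ∑ j ∈ Finset.Icc 1 (r - 1), Pr (edgeProb r d n) (edgeCandidates n r) (fun E =>
        ∃ A ∈ (Finset.univ : Finset (Finset (Fin n))), (A.card : ℝ) ≤ a * n ∧
          κ j * n ≤ ((E.filter (fun e => (e ∩ A).card = j)).card : ℝ)) := Pr_exists_le hp0 hp1 _ _
    _ ≤ ∑ j ∈ Finset.Icc 1 (r - 1), ∑ A : Finset (Fin n), Real.exp (-(5 * n)) :=
        Finset.sum_le_sum fun j hj => (Pr_exists_le hp0 hp1 _ _).trans
          (Finset.sum_le_sum (hone j hj))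
    _ ≤ r * ((2 : ℝ) ^ n * Real.exp (-(5 * n))) := by
        rw [Finset.sum_const, Finset.sum_const, nsmul_eq_mul, nsmul_eq_mul, Finset.card_univ,
          Fintype.card_finset, Fintype.card_fin]
        push_cast
        refine mul_le_mul_of_nonneg_right ?_ (by positivity)
        have : (Finset.Icc 1 (r - 1)).card ≤ r := by simp
        exact_mod_cast this

/-! ### Assembling the random events -/

theorem binomProb_eq_Pr (n r : ℕ) (p : ℝ) (P : Finset (Finset (Fin n)) → Prop) :
    binomProb n r p P = Pr p (edgeCandidates n r) P := by
  unfold binomProb Pr Ex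
  refine Finset.sum_congr rfl fun E _ => ?_
  by_cases h : P E <;> simp [h]

/-- The deterministic part: outside the three exceptional events there is a good coloring. -/
theorem hasGoodColoring_of_events {n r k c q : ℕ} (hr : 3 ≤ r) (hk : 0 < k) (hc : 0 < c)
    (hq : 0 < q) {d η ς τ a kmax : ℝ} (hς : τ ≤ ς)
    (hςq : ς ≤ q * (a / 2)) (hak : (1 + η) / k ≤ a) (han : 2 ≤ a * n)
    (hkmax : ((k + r * c * q : ℕ) : ℝ) ≤ kmax)
    {E : Finset (Finset (Fin n))} (hE : E ⊆ edgeCandidates n r)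
    (h1 : ∃ W : Finset (Fin n), (W.card : ℝ) ≤ τ * n ∧
      ∃ σ ∈ balancedColorings n k η, ProperColoring (E.filter (fun e => Disjoint e W)) σ)
    (h2 : ¬ ∃ W : Finset (Fin n), W.Nonempty ∧ (W.card : ℝ) ≤ ς * n ∧
      (c : ℝ) * W.card ≤ ((E.filter (fun e => e ⊆ W)).card : ℝ))
    (h3 : ¬ ∃ A : Finset (Fin n), ∃ j : ℕ, (A.card : ℝ) ≤ a * n ∧ 1 ≤ j ∧ j ≤ r - 1 ∧
        (10 * d / r) * (r.choose j : ℝ) * a ^ j * n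
          ≤ ((E.filter (fun e => (e ∩ A).card = j)).card : ℝ)) :
    HasGoodColoring r kmax (fun j => (10 * d / r) * (r.choose j : ℝ) * a ^ j) E := by
  obtain ⟨W, hW, σ, hσ, hσp⟩ := h1
  push Not at h2 h3
  have hn0 : (0 : ℝ) ≤ n := Nat.cast_nonneg n
  have hk' : (0 : ℝ) < k := by exact_mod_cast hk
  have hfl : a * n / 2 ≤ (⌊a * n⌋₊ : ℝ) := by
    have := Nat.lt_floor_add_one (a * n)
    linarith
  have hflle : (⌊a * n⌋₊ : ℝ) ≤ a * n := Nat.floor_le (by linarith)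
  have hWς : (W.card : ℝ) ≤ ς * n := hW.trans (mul_le_mul_of_nonneg_right hς hn0)
  obtain ⟨f, hf, hfM⟩ := combine_coloring (c := c) (q := q) (M := ⌊a * n⌋₊) hr hc hq hE W
    (by
      have h4 : (W.card : ℝ) ≤ q * (⌊a * n⌋₊ : ℝ) := by
        calc (W.card : ℝ) ≤ ς * n := hWς
          _ ≤ q * (a / 2) * n := mul_le_mul_of_nonneg_right hςq hn0
          _ = q * (a * n / 2) := by ring
          _ ≤ q * (⌊a * n⌋₊ : ℝ) := mul_le_mul_of_nonneg_left hfl (Nat.cast_nonneg q)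
      exact_mod_cast h4)
    (fun W' hW' hne => by
      have h5 := h2 W' hne (le_trans (by exact_mod_cast Finset.card_le_card hW') hWς)
      exact_mod_cast h5)
    σ hσp
    (fun i => Nat.le_floor ((mem_balancedColorings.1 hσ i).trans (by
      rw [mul_comm, mul_div_assoc, mul_comm]
      exact mul_le_mul_of_nonneg_right hak hn0)))
  refine ⟨k + r * c * q, hkmax, f, hf, fun i j hj1 hj2 => ?_⟩
  have h8 : (Finset.univ.filter (fun v => f v = i)).card ≤ ⌊a * n⌋₊ := by
    have := hfM i
    unfold cnt at this
    convert this
  have h6 := h3 (Finset.univ.filter (fun v => f v = i)) j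
    (le_trans (by exact_mod_cast h8) hflle) hj1 hj2
  have h7 : ∀ e : Finset (Fin n), e ∩ Finset.univ.filter (fun v => f v = i)
      = e.filter (fun v => f v = i) := fun e => by ext v; simp
  simp only [h7] at h6
  exact h6.le

/-- The conclusion for given parameters: `k` colors for most vertices, `r c q` extra colors for
the deleted ones, and the conditions under which the three exceptional events are unlikely. -/
theorem good_coloring_core {r k c q : ℕ} (hr : 3 ≤ r) (hk : 0 < k) {d η θ a kmax : ℝ}
    (hd : 0 < d) (hη : 0 < η) (hθ : 0 ≤ θ) (hL : 16 * Real.exp 6 ≤ Real.log k)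
    (hθL : 2 ≤ θ * Real.log k)
    (hΛ : (1 + η) ^ r * (d / r) ≤ (1 - θ) * Real.log k * (k : ℝ) ^ (r - 1))
    (hc : 8 * Real.log k ^ r ≤ c) (hq : 2 * Real.log k ≤ q)
    (hak : (1 + η) / k ≤ a) (ha1 : a ≤ 1) (had : (r : ℝ) ≤ d * a ^ (r - 1))
    (hkmax : ((k + r * c * q : ℕ) : ℝ) ≤ kmax) :
    Tendsto (fun n : ℕ => (n : ℝ) * Pr (edgeProb r d n) (edgeCandidates n r) (fun E =>
      ¬ HasGoodColoring r kmax (fun j => (10 * d / r) * (r.choose j : ℝ) * a ^ j) E))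
      atTop (nhds 0) := by
  set L := Real.log k with hLdef
  have hk' : (0 : ℝ) < k := by exact_mod_cast hk
  have hr' : (0 : ℝ) < r := by exact_mod_cast (by omega : 0 < r)
  have he6 : 1 ≤ Real.exp 6 := Real.one_le_exp (by norm_num)
  have hL16 : 16 ≤ L := by linarith
  have hL0 : 0 < L := by linarith
  have ha0 : 0 < a := lt_of_lt_of_le (by positivity) hak
  have hka : 1 / (k : ℝ) ≤ a :=
    le_trans (div_le_div_of_nonneg_right (by linarith) hk'.le) hak
  set ρ := 2 * (L * Real.exp 6 / (k : ℝ) ^ 2) with hρ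
  have hρ0 : 0 < ρ := by positivity
  -- sets of `ς n` vertices cover the deleted set, since `L ≥ 16 e⁶`
  set ς := L / k with hς
  have hς0 : 0 < ς := by positivity
  have hLr : L ≤ L ^ r := le_self_pow₀ (by linarith) (by omega)
  have hcL : 8 * L ≤ c := by linarith
  have hc0 : 0 < c := by
    have : (0 : ℝ) < c := by linarith
    exact_mod_cast this
  have hq0 : 0 < q := by
    have : (0 : ℝ) < q := by linarith
    exact_mod_cast this
  have hτς : 2 * √(2 * ρ) ≤ ς := by
    have h1 : √(2 * ρ) ≤ ς / 2 := by
      refine Real.sqrt_le_iff.2 ⟨by positivity, ?_⟩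
      have h2 : 16 * Real.exp 6 * L ≤ L * L := mul_le_mul_of_nonneg_right hL hL0.le
      have h3 : (ς / 2) ^ 2 = (L * L / 4) / (k : ℝ) ^ 2 := by rw [hς]; ring
      have h4 : 2 * ρ = (4 * (L * Real.exp 6)) / (k : ℝ) ^ 2 := by rw [hρ]; ring
      rw [h3, h4]
      exact div_le_div_of_nonneg_right (by linarith) (by positivity)
    linarith
  have hςq : ς ≤ q * (a / 2) := by
    calc ς = 2 * L * (1 / k / 2) := by rw [hς]; ring
      _ ≤ q * (a / 2) := mul_le_mul hq (by linarith) (by positivity) (by positivity)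
  have hclog : 2 + Real.log (1 / ς) ≤ c := by
    have h1 : Real.log (1 / ς) = L - Real.log L := by
      rw [hς, one_div_div, Real.log_div hk'.ne' hL0.ne']
    have h2 : 0 ≤ Real.log L := Real.log_nonneg (by linarith)
    rw [h1]; linarith
  have hdle : d ≤ r * (L * (k : ℝ) ^ (r - 1)) := by
    have h1 : (1 : ℝ) ≤ (1 + η) ^ r := one_le_pow₀ (by linarith)
    have h2 : d / r ≤ (1 + η) ^ r * (d / r) := le_mul_of_one_le_left (by positivity) h1
    have h3 : (1 - θ) * L * (k : ℝ) ^ (r - 1) ≤ L * (k : ℝ) ^ (r - 1) := by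
      refine mul_le_mul_of_nonneg_right ?_ (by positivity)
      nlinarith
    have h4 := h2.trans (hΛ.trans h3)
    rw [div_le_iff₀ hr'] at h4
    linarith
  have hcd : Real.exp 2 * d * ς ^ (r - 1) ≤ c * r := by
    have he2 : Real.exp 2 ≤ 8 := by
      have h1 : Real.exp 2 = Real.exp 1 ^ 2 := by rw [← Real.exp_nat_mul]; norm_num
      rw [h1]
      nlinarith [Real.exp_one_lt_d9, Real.exp_pos 1]
    calc Real.exp 2 * d * ς ^ (r - 1)
        ≤ 8 * (r * (L * (k : ℝ) ^ (r - 1))) * ς ^ (r - 1) := by gcongr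
      _ = 8 * L ^ r * r := by
          have h2 : L ^ r = L ^ (r - 1) * L := by rw [← pow_succ]; congr 1; omega
          rw [hς, div_pow, h2]; field_simp
      _ ≤ c * r := mul_le_mul_of_nonneg_right hc hr'.le
  have hbal := prob_balanced_ge hr hk hd hη (by linarith) hθL hΛ
  have hp1ev : ∀ᶠ n : ℕ in atTop, edgeProb r d n ≤ 1 :=
    ((edgeProb_tendsto hr d).eventually (gt_mem_nhds zero_lt_one)).mono fun n h => le_of_lt h
  have han : ∀ᶠ n : ℕ in atTop, 2 ≤ a * n :=
    (tendsto_natCast_atTop_atTop.const_mul_atTop ha0).eventually_ge_atTop 2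
  have hbound : ∀ᶠ n : ℕ in atTop, (n : ℝ) * Pr (edgeProb r d n) (edgeCandidates n r) (fun E =>
      ¬ HasGoodColoring r kmax (fun j => (10 * d / r) * (r.choose j : ℝ) * a ^ j) E)
      ≤ (n : ℝ) * Real.exp (-(n * ρ)) + 6 / ς ^ 3 * (n : ℝ)⁻¹
        + r * ((n : ℝ) * Real.exp (-(n * 1))) := by
    filter_upwards [hbal, hp1ev, han, eventually_gt_atTop 0] with n hbal hp1 han hn
    have hn' : (0 : ℝ) < n := by exact_mod_cast hn
    have hp0 : 0 ≤ edgeProb r d n := by unfold edgeProb; positivity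
    have e1 := prob_deletion hr hn hp0 hp1 hρ0.le _ hbal
    have e2 := prob_sparse hr hn hd hς0 (c := c)
      (by have : (2 : ℝ) ≤ c := by linarith
          exact_mod_cast this) hclog hcd hp1
    have e3 := prob_meeting hr hn hd ha0.le ha1 had hp1
    have e4 : r * ((2 : ℝ) ^ n * Real.exp (-(5 * n))) ≤ r * Real.exp (-(n * 1)) := by
      refine mul_le_mul_of_nonneg_left ?_ hr'.le
      have h2 : (2 : ℝ) ^ n ≤ Real.exp 1 ^ n :=
        pow_le_pow_left₀ (by norm_num) (by linarith [Real.exp_one_gt_d9]) n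
      rw [← Real.exp_nat_mul] at h2
      refine (mul_le_mul_of_nonneg_right h2 (Real.exp_pos _).le).trans ?_
      rw [← Real.exp_add]
      exact Real.exp_le_exp.2 (by linarith)
    have e5 : Pr (edgeProb r d n) (edgeCandidates n r) (fun E =>
        ¬ HasGoodColoring r kmax (fun j => (10 * d / r) * (r.choose j : ℝ) * a ^ j) E)
        ≤ Real.exp (-(n * ρ)) + (6 / (ς ^ 3 * (n : ℝ) ^ 2) + r * Real.exp (-(n * 1))) := by
      refine le_trans (le_trans (Pr_mono hp0 hp1 fun E hE hbad => ?_)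
        (Pr_or_le hp0 hp1 _ _)) (add_le_add e1 (le_trans (Pr_or_le hp0 hp1 _ _)
          (add_le_add e2 (e3.trans e4))))
      by_contra hcon
      push Not at hcon
      obtain ⟨h1, h2, h3⟩ := hcon
      refine hbad (hasGoodColoring_of_events hr hk hc0 hq0 hτς hςq hak han hkmax hE h1 ?_ ?_)
      · push Not; exact h2
      · push Not; exact h3
    refine (mul_le_mul_of_nonneg_left e5 hn'.le).trans (le_of_eq ?_)
    field_simp
    ring
  have hexp : ∀ γ : ℝ, 0 < γ →
      Tendsto (fun n : ℕ => (n : ℝ) * Real.exp (-(n * γ))) atTop (nhds 0) := by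
    intro γ hγ
    have h1 := (Real.tendsto_pow_mul_exp_neg_atTop_nhds_zero 1).comp
      (tendsto_natCast_atTop_atTop.atTop_mul_const hγ (f := fun n : ℕ => (n : ℝ)))
    have h2 := h1.const_mul γ⁻¹
    rw [mul_zero] at h2
    refine h2.congr fun n => ?_
    simp only [Function.comp, pow_one]
    field_simp
  have hlim : Tendsto (fun n : ℕ => (n : ℝ) * Real.exp (-(n * ρ)) + 6 / ς ^ 3 * (n : ℝ)⁻¹
        + r * ((n : ℝ) * Real.exp (-(n * 1)))) atTop (nhds 0) := by
    have h1 := ((hexp ρ hρ0).add (tendsto_inv_atTop_nhds_zero_nat.const_mul (6 / ς ^ 3))).add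
      ((hexp 1 one_pos).const_mul (r : ℝ))
    simpa using h1
  refine tendsto_of_tendsto_of_tendsto_of_le_of_le' tendsto_const_nhds hlim ?_ hbound
  filter_upwards [hp1ev] with n hp1
  have hp0 : 0 ≤ edgeProb r d n := by unfold edgeProb; positivity
  exact mul_nonneg (Nat.cast_nonneg n) (Pr_nonneg hp0 hp1 _)

/-! ### Choice of the parameters -/

/-- A polylogarithmic number of extra colors is negligible. -/
theorem eventually_extra_colors_le (r : ℕ) {ε δ : ℝ} (hε : 0 < ε) (hδ : 0 < δ) :
    ∀ᶠ x : ℝ in atTop, 1 + 27 * r * Real.log (δ * x) ^ (r + 1) ≤ ε * x := by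
  have hx : Tendsto (fun x : ℝ => δ * x) atTop atTop := tendsto_id.const_mul_atTop hδ
  have h1 := (isLittleO_pow_log_id_atTop (n := r + 1)).def
    (c := ε / δ / (2 * (27 * r + 1))) (by positivity)
  filter_upwards [hx.eventually h1, eventually_ge_atTop (2 / ε), eventually_gt_atTop 0]
    with x h2 h3 hx0
  rw [div_le_iff₀ hε] at h3
  have h4 : Real.log (δ * x) ^ (r + 1) ≤ ε / δ / (2 * (27 * r + 1)) * (δ * x) := by
    have h5 : ‖id (δ * x)‖ = δ * x := by
      rw [id, Real.norm_eq_abs, abs_of_pos (by positivity)]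
    rw [h5] at h2
    exact (le_abs_self _).trans h2
  have h6 : ε / δ / (2 * (27 * r + 1)) * (δ * x) = ε * x / (2 * (27 * (r : ℝ) + 1)) := by
    field_simp
  rw [h6, le_div_iff₀ (by positivity)] at h4
  have h7 : 27 * r * Real.log (δ * x) ^ (r + 1) ≤ ε * x / 2 := by
    by_cases h8 : 0 ≤ Real.log (δ * x) ^ (r + 1)
    · nlinarith
    · push Not at h8
      have h9 : 27 * r * Real.log (δ * x) ^ (r + 1) ≤ 0 :=
        mul_nonpos_of_nonneg_of_nonpos (by positivity) h8.le
      have : 0 < ε * x := by positivity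
      linarith
  linarith

/-- The leading order `((r-1)d / (r log d))^{1/(r-1)}` of the number of colors. -/
noncomputable def leadColors (r : ℕ) (d : ℝ) : ℝ :=
  (((r : ℝ) - 1) * d / (r * Real.log d)) ^ ((1 : ℝ) / ((r : ℝ) - 1))

theorem leadColors_tendsto {r : ℕ} (hr : 3 ≤ r) : Tendsto (leadColors r) atTop atTop := by
  have hr3 : (3 : ℝ) ≤ r := by exact_mod_cast hr
  have h1 : Tendsto (fun d : ℝ => d / Real.log d) atTop atTop := by
    have h2 : Tendsto (fun d : ℝ => Real.log d / d) atTop (nhdsWithin 0 (Set.Ioi 0)) := by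
      refine tendsto_nhdsWithin_iff.2 ⟨?_, ?_⟩
      · simpa using Real.isLittleO_log_id_atTop.tendsto_div_nhds_zero
      · filter_upwards [eventually_gt_atTop 1] with d hd
        exact div_pos (Real.log_pos hd) (by linarith)
    refine h2.inv_tendsto_nhdsGT_zero.congr fun d => ?_
    simp
  have h3 : Tendsto (fun d : ℝ => ((r : ℝ) - 1) / r * (d / Real.log d)) atTop atTop :=
    h1.const_mul_atTop (div_pos (by linarith) (by linarith))
  have h4 := (tendsto_rpow_atTop (y := (1 : ℝ) / ((r : ℝ) - 1))
    (div_pos one_pos (by linarith))).comp h3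
  refine h4.congr fun d => ?_
  simp only [Function.comp, leadColors]
  rw [div_mul_div_comm]

theorem leadColors_pow {r : ℕ} (hr : 3 ≤ r) {d : ℝ} (hd : 1 < d) :
    leadColors r d ^ (r - 1) = ((r : ℝ) - 1) * d / (r * Real.log d) := by
  have hr3 : (3 : ℝ) ≤ r := by exact_mod_cast hr
  have hcast : ((r - 1 : ℕ) : ℝ) = (r : ℝ) - 1 := by
    rw [Nat.cast_sub (by omega)]; simp
  have h0 : 0 ≤ ((r : ℝ) - 1) * d / (r * Real.log d) :=
    div_nonneg (mul_nonneg (by linarith) (by linarith))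
      (mul_nonneg (by linarith) (Real.log_pos hd).le)
  have h1 : ((r : ℝ) - 1) ≠ 0 := by linarith
  rw [leadColors, ← Real.rpow_natCast, ← Real.rpow_mul h0, hcast, one_div,
    inv_mul_cancel₀ h1, Real.rpow_one]

/-- The logarithm of `leadColors r d` is asymptotically `log d / (r-1)`; only the lower bound is
needed. -/
theorem eventually_log_leadColors_ge {r : ℕ} (hr : 3 ≤ r) {θ : ℝ} (hθ : 0 < θ) :
    ∀ᶠ d : ℝ in atTop, (1 - θ) * Real.log d ≤ ((r : ℝ) - 1) * Real.log (leadColors r d) := by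
  have hr3 : (3 : ℝ) ≤ r := by exact_mod_cast hr
  have hcast : ((r - 1 : ℕ) : ℝ) = (r : ℝ) - 1 := by
    rw [Nat.cast_sub (by omega)]; simp
  have h1 := Real.tendsto_log_atTop.eventually
    (Real.isLittleO_log_id_atTop.def (c := θ / 2) (by positivity))
  have h2 : ∀ᶠ d : ℝ in atTop, -Real.log (((r : ℝ) - 1) / r) ≤ θ / 2 * Real.log d :=
    (Real.tendsto_log_atTop.const_mul_atTop (by positivity)).eventually_ge_atTop _
  filter_upwards [h1, h2, eventually_gt_atTop 1] with d h1 h2 hd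
  have hlog := Real.log_pos hd
  have h3 : Real.log (Real.log d) ≤ θ / 2 * Real.log d := by
    have h4 : ‖id (Real.log d)‖ = Real.log d := by
      rw [id, Real.norm_eq_abs, abs_of_pos hlog]
    rw [h4] at h1
    exact (le_abs_self _).trans h1
  have h5 : ((r : ℝ) - 1) * Real.log (leadColors r d)
      = Real.log (((r : ℝ) - 1) / r) + Real.log d - Real.log (Real.log d) := by
    have hr1 : ((r : ℝ) - 1) / r ≠ 0 := (div_pos (by linarith) (by linarith)).ne'
    rw [← hcast, ← Real.log_pow, leadColors_pow hr hd, hcast, ← div_mul_div_comm,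
      Real.log_mul hr1 (div_pos (by linarith) hlog).ne', Real.log_div (by linarith) hlog.ne']
    ring
  rw [h5]
  linarith

/-- With probability `1 − o(1/n)`, the binomial random hypergraph `H_r(n,p)` with
`p = d(r−1)!/n^(r−1)` admits a proper coloring using at most
`(1+ε/2)·((r−1)d/(r log d))^(1/(r−1))` colors in which every color class `A` meets at most
`κ_j·n` hyperedges in exactly `j` vertices, for every `1 ≤ j ≤ r−1`, where
`κ_j = (10d/r)·C(r,j)·a^j` and `a = (1+ε/2)·(r log d/((r−1)d))^(1/(r−1))`. -/
theorem binomial_hypergraph_good_coloring (r : ℕ) (hr : 3 ≤ r) (ε : ℝ) (hε : 0 < ε) :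
    ∃ d₀ : ℝ, ∀ d : ℝ, d₀ ≤ d →
      Filter.Tendsto
        (fun n : ℕ =>
          (n : ℝ) *
            binomProb n r (d * ((r - 1).factorial : ℝ) / (n : ℝ) ^ (r - 1))
              (fun E =>
                ¬ HasGoodColoring r
                    ((1 + ε / 2) *
                      ((((r : ℝ) - 1) * d / (r * Real.log d)) ^ ((1 : ℝ) / ((r : ℝ) - 1))))
                    (fun j => (10 * d / r) * (r.choose j : ℝ) *
                      ((1 + ε / 2) *
                          ((r * Real.log d / (((r : ℝ) - 1) * d)) ^
                            ((1 : ℝ) / ((r : ℝ) - 1)))) ^ j)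
                    E))
        Filter.atTop (nhds 0) := by
  have hr3 : (3 : ℝ) ≤ r := by exact_mod_cast hr
  have hr' : (0 : ℝ) < r := by linarith
  have hε1 : 0 < ε / 4 := by positivity
  -- `(1 + η) ^ r = 1 + ε / 4` and `(1 - θ) ^ 2 * (1 + ε / 4) = 1`
  obtain ⟨η, hη, hηr⟩ : ∃ η : ℝ, 0 < η ∧ (1 + η) ^ r = 1 + ε / 4 := by
    refine ⟨(1 + ε / 4) ^ (r : ℝ)⁻¹ - 1, ?_, ?_⟩
    · have := Real.one_lt_rpow (show 1 < 1 + ε / 4 by linarith) (inv_pos.2 hr')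
      linarith
    · rw [add_sub_cancel, Real.rpow_inv_natCast_pow (by linarith) (by omega)]
  obtain ⟨θ, hθ0, hθ1, hθ⟩ : ∃ θ : ℝ, 0 < θ ∧ θ < 1 ∧ (1 - θ) ^ 2 * (1 + ε / 4) = 1 := by
    have hs : 1 < √(1 + ε / 4) := by
      rw [Real.lt_sqrt (by norm_num)]; linarith
    refine ⟨1 - (√(1 + ε / 4))⁻¹, ?_, ?_, ?_⟩
    · have := inv_lt_one_of_one_lt₀ hs
      linarith
    · have : 0 < (√(1 + ε / 4))⁻¹ := by positivity
      linarith
    · rw [sub_sub_cancel, inv_pow, Real.sq_sqrt (by linarith)]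
      exact inv_mul_cancel₀ (by linarith)
  have hηε : η ≤ ε / 4 := by
    have h1 : 1 + η ≤ (1 + η) ^ r := le_self_pow₀ (by linarith) (by omega)
    linarith
  have hlead := leadColors_tendsto hr
  have hev : ∀ᶠ d : ℝ in atTop, 1 < d ∧ ((r : ℝ) - 1) ≤ Real.log d ∧
      (1 - θ) * Real.log d ≤ ((r : ℝ) - 1) * Real.log (leadColors r d) ∧
      1 + ε / 2 ≤ leadColors r d ∧ 16 * Real.exp 6 ≤ Real.log (leadColors r d) ∧
      2 / θ ≤ Real.log (leadColors r d) ∧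
      1 + 27 * r * Real.log ((2 + ε / 4) * leadColors r d) ^ (r + 1) ≤ ε / 4 * leadColors r d := by
    filter_upwards [eventually_gt_atTop 1, Real.tendsto_log_atTop.eventually_ge_atTop ((r : ℝ) - 1),
      eventually_log_leadColors_ge hr hθ0, hlead.eventually_ge_atTop (1 + ε / 2),
      (Real.tendsto_log_atTop.comp hlead).eventually_ge_atTop (16 * Real.exp 6),
      (Real.tendsto_log_atTop.comp hlead).eventually_ge_atTop (2 / θ),
      hlead.eventually (eventually_extra_colors_le r hε1 (show 0 < 2 + ε / 4 by linarith))]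
      with d h1 h2 h3 h4 h5 h6 h7
    exact ⟨h1, h2, h3, h4, h5, h6, h7⟩
  obtain ⟨d₀, hd₀⟩ := eventually_atTop.1 hev
  refine ⟨d₀, fun d hdd => ?_⟩
  obtain ⟨hd1, hlogd, hlogk0, hk0ge, hL16, hLθ, hextra⟩ := hd₀ d hdd
  have hpow := leadColors_pow hr hd1
  have hinv : (r * Real.log d / (((r : ℝ) - 1) * d)) ^ ((1 : ℝ) / ((r : ℝ) - 1))
      = (leadColors r d)⁻¹ := by
    have h0 : 0 ≤ ((r : ℝ) - 1) * d / (r * Real.log d) :=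
      div_nonneg (mul_nonneg (by linarith) (by linarith))
        (mul_nonneg hr'.le (Real.log_pos hd1).le)
    rw [leadColors, ← Real.inv_rpow h0, inv_div]
  have hfold : (((r : ℝ) - 1) * d / (r * Real.log d)) ^ ((1 : ℝ) / ((r : ℝ) - 1))
      = leadColors r d := rfl
  rw [hinv, hfold]
  set κ := leadColors r d with hκ
  have hκ1 : 1 ≤ κ := by linarith
  have hκ0 : 0 < κ := by linarith
  have hd0 : 0 < d := by linarith
  have hlogd0 : 0 < Real.log d := Real.log_pos hd1
  set k := ⌈(1 + ε / 4) * κ⌉₊ with hk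
  have hkge : (1 + ε / 4) * κ ≤ k := Nat.le_ceil _
  have hklt : (k : ℝ) < (1 + ε / 4) * κ + 1 := Nat.ceil_lt_add_one (by positivity)
  have hkle : (k : ℝ) ≤ (2 + ε / 4) * κ := by linarith
  have hκk : κ ≤ k := le_trans (by nlinarith) hkge
  have hk0' : (0 : ℝ) < k := by linarith
  have hk0 : 0 < k := by exact_mod_cast hk0'
  have hLge : Real.log κ ≤ Real.log k := Real.log_le_log hκ0 hκk
  set L := Real.log k with hL
  have hLle : L ≤ Real.log ((2 + ε / 4) * κ) := Real.log_le_log hk0' hkle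
  have hL1 : 1 ≤ L := by
    have : 1 ≤ Real.exp 6 := Real.one_le_exp (by norm_num)
    linarith
  have hfinal := good_coloring_core (r := r) (k := k) (c := ⌈8 * L ^ r⌉₊) (q := ⌈2 * L⌉₊)
    (d := d) (η := η) (θ := θ) (a := (1 + ε / 2) * κ⁻¹) (kmax := (1 + ε / 2) * κ)
    hr hk0 hd0 hη hθ0.le (hL16.trans hLge) ?_ ?_ (Nat.le_ceil _) (Nat.le_ceil _) ?_ ?_ ?_ ?_
  · refine hfinal.congr fun n => ?_
    rw [binomProb_eq_Pr]
    rfl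
  · rw [div_le_iff₀ hθ0] at hLθ
    nlinarith
  · have h1 : d / r = κ ^ (r - 1) * (Real.log d / ((r : ℝ) - 1)) := by
      rw [hpow]
      have : (r : ℝ) - 1 ≠ 0 := by linarith
      field_simp
    have h2 : (1 - θ) * (Real.log d / ((r : ℝ) - 1)) ≤ L := by
      refine le_trans ?_ hLge
      rw [← mul_div_assoc, div_le_iff₀ (by linarith)]
      linarith
    have h3 : (1 + ε / 4) ^ (r - 1) * κ ^ (r - 1) ≤ (k : ℝ) ^ (r - 1) := by
      rw [← mul_pow]
      exact pow_le_pow_left₀ (by positivity) hkge _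
    have h4 : (1 + ε / 4) ^ 2 ≤ (1 + ε / 4) ^ (r - 1) :=
      pow_le_pow_right₀ (by linarith) (by omega)
    have h5 : 0 ≤ Real.log d / ((r : ℝ) - 1) := div_nonneg hlogd0.le (by linarith)
    have h6 : 0 ≤ 1 - θ := by linarith
    calc (1 + η) ^ r * (d / r)
        = ((1 - θ) ^ 2 * (1 + ε / 4)) * ((1 + ε / 4)
            * (κ ^ (r - 1) * (Real.log d / ((r : ℝ) - 1)))) := by rw [hηr, h1, hθ, one_mul]
      _ = (1 - θ) * ((1 - θ) * (Real.log d / ((r : ℝ) - 1))) *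
            ((1 + ε / 4) ^ 2 * κ ^ (r - 1)) := by ring
      _ ≤ (1 - θ) * L * (k : ℝ) ^ (r - 1) := by
          refine mul_le_mul (mul_le_mul_of_nonneg_left h2 h6) ?_ (by positivity)
            (mul_nonneg h6 (by linarith))
          exact (mul_le_mul_of_nonneg_right h4 (by positivity)).trans h3
  · rw [← div_eq_mul_inv, div_le_div_iff₀ hk0' hκ0]
    nlinarith
  · rw [← div_eq_mul_inv, div_le_one hκ0]
    exact hk0ge
  · have h1 : κ⁻¹ ^ (r - 1) ≤ ((1 + ε / 2) * κ⁻¹) ^ (r - 1) :=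
      pow_le_pow_left₀ (by positivity)
        (le_mul_of_one_le_left (by positivity) (by linarith)) _
    refine le_trans ?_ (mul_le_mul_of_nonneg_left h1 hd0.le)
    rw [inv_pow, hpow, inv_div, ← mul_div_assoc, le_div_iff₀ (mul_pos (by linarith) hd0)]
    have : r * d * ((r : ℝ) - 1) ≤ r * d * Real.log d :=
      mul_le_mul_of_nonneg_left hlogd (by positivity)
    linarith
  · have hLr : 1 ≤ L ^ r := one_le_pow₀ hL1
    have hc : (⌈8 * L ^ r⌉₊ : ℝ) ≤ 9 * L ^ r := by
      have := Nat.ceil_lt_add_one (show 0 ≤ 8 * L ^ r by positivity)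
      linarith
    have hq : (⌈2 * L⌉₊ : ℝ) ≤ 3 * L := by
      have := Nat.ceil_lt_add_one (show 0 ≤ 2 * L by positivity)
      linarith
    have h1 : (r : ℝ) * ⌈8 * L ^ r⌉₊ * ⌈2 * L⌉₊ ≤ r * (9 * L ^ r) * (3 * L) := by gcongr
    have h2 : (r : ℝ) * (9 * L ^ r) * (3 * L) = 27 * r * L ^ (r + 1) := by ring
    have h3 : 27 * r * L ^ (r + 1) ≤ 27 * r * Real.log ((2 + ε / 4) * κ) ^ (r + 1) := by gcongr
    push_cast
    linarith
end

section
/- Let r ≥ 2 be an integer, let H be an r-uniform hypergraph with vertex set V, let U ⊆ V, and let δ be a positive integer. Suppose that for every nonempty subset S ⊆ U, the number of hyperedges of H entirely contained in S is strictly less than δ·|S|/r. Then there is a map c: U → {1,…,δ} such that no hyperedge of H contained in U has all of its vertices assigned the same color by c. -/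
/-!
The sparsity hypothesis makes the hypergraph induced on `U` degenerate: in every nonempty `S ⊆ U`
the degrees sum to `r` times the number of hyperedges inside `S`, hence to less than `δ|S|`, so some
vertex of `S` lies in fewer than `δ` hyperedges inside `S` (`exists_low_degree`). Removing such a
vertex, coloring the rest by induction and putting the vertex back gives the coloring: as `r ≥ 2`,
each of the fewer than `δ` hyperedges at the vertex is made non-monochromatic by avoiding the color
of one other vertex of that hyperedge, so a color remains available.
-/

theorem exists_low_degree {V : Type*} [DecidableEq V] {r δ : ℕ} (hr : 0 < r)
    {H : Finset (Finset V)} (hH : ∀ e ∈ H, e.card = r) {S : Finset V}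
    (hS : ((H.filter (fun e => e ⊆ S)).card : ℝ) < δ * S.card / r) :
    ∃ v ∈ S, (H.filter (fun e => e ⊆ S ∧ v ∈ e)).card < δ := by
  by_contra! hdeg
  have hlt : (H.filter (fun e => e ⊆ S)).card * r < δ * S.card := by
    rw [lt_div_iff₀ (by exact_mod_cast hr)] at hS
    exact_mod_cast hS
  have hdouble := Finset.sum_card_bipartiteAbove_eq_sum_card_bipartiteBelow
    (s := S) (t := H.filter (fun e => e ⊆ S)) (fun v e => v ∈ e)
  have hleft : S.card * δ ≤ ∑ v ∈ S,
      (Finset.bipartiteAbove (fun v e => v ∈ e) (H.filter (fun e => e ⊆ S)) v).card := by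
    rw [← smul_eq_mul]
    refine Finset.card_nsmul_le_sum _ _ _ fun v hv => ?_
    rw [Finset.bipartiteAbove, Finset.filter_filter]
    exact hdeg v hv
  have hright : ∑ e ∈ H.filter (fun e => e ⊆ S),
      (Finset.bipartiteBelow (fun v e => v ∈ e) S e).card
        = (H.filter (fun e => e ⊆ S)).card * r := by
    refine Finset.sum_const_nat fun e he => ?_
    rw [Finset.mem_filter] at he
    rw [Finset.bipartiteBelow, Finset.filter_mem_eq_inter, Finset.inter_eq_right.mpr he.2,
      hH e he.1]
  have := mul_comm δ S.card
  omega

/-- If `H` is an `r`-uniform hypergraph and `U` a set of vertices such that every nonempty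
`S ⊆ U` contains strictly fewer than `δ|S|/r` hyperedges of `H`, then `U` can be colored
with `δ` colors so that no hyperedge of `H` contained in `U` is monochromatic. -/
theorem recolor_sparse_subset {V : Type*} [DecidableEq V] (r : ℕ) (hr : 2 ≤ r)
    (H : Finset (Finset V)) (hH : ∀ e ∈ H, e.card = r) (U : Finset V) (δ : ℕ) (hδ : 0 < δ)
    (hsparse : ∀ S : Finset V, S ⊆ U → S.Nonempty →
      ((H.filter (fun e => e ⊆ S)).card : ℝ) < δ * S.card / r) :
    ∃ c : V → Fin δ, ∀ e ∈ H, e ⊆ U → ∃ v ∈ e, ∃ w ∈ e, c v ≠ c w := by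
  induction U using Finset.strongInduction with
  | H U ih =>
    rcases U.eq_empty_or_nonempty with rfl | hU
    · refine ⟨fun _ => ⟨0, hδ⟩, fun e he hsub => ?_⟩
      have hcard := hH e he
      rw [Finset.subset_empty.mp hsub, Finset.card_empty] at hcard
      omega
    · obtain ⟨v, hv, hdeg⟩ := exists_low_degree (by omega) hH (hsparse U subset_rfl hU)
      obtain ⟨c, hc⟩ := ih (U.erase v) (Finset.erase_ssubset hv)
        fun S hS => hsparse S (hS.trans (Finset.erase_subset v U))
      -- In every hyperedge, pick a vertex other than `v`; its color is forbidden for `v`.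
      have hother : ∀ e : Finset V, ∃ w, e ∈ H → w ∈ e ∧ w ≠ v := by
        intro e
        by_cases he : e ∈ H
        · obtain ⟨w, hw⟩ := Finset.exists_mem_ne (by rw [hH e he]; omega : 1 < e.card) v
          exact ⟨w, fun _ => hw⟩
        · exact ⟨v, fun h => absurd h he⟩
      choose w hw using hother
      obtain ⟨a, ha⟩ : ∃ a : Fin δ,
          a ∉ (H.filter (fun e => e ⊆ U ∧ v ∈ e)).image (fun e => c (w e)) := by
        by_contra! hall
        have h1 := Finset.card_le_card (fun x (_ : x ∈ Finset.univ) => hall x)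
        rw [Finset.card_univ, Fintype.card_fin] at h1
        exact absurd (h1.trans Finset.card_image_le) (not_le.mpr hdeg)
      refine ⟨Function.update c v a, fun e he hsub => ?_⟩
      by_cases hve : v ∈ e
      · obtain ⟨hwe, hwv⟩ := hw e he
        refine ⟨v, hve, w e, hwe, fun heq => ha ?_⟩
        rw [Function.update_self, Function.update_of_ne hwv] at heq
        exact Finset.mem_image.mpr ⟨e, Finset.mem_filter.mpr ⟨he, hsub, hve⟩, heq.symm⟩
      · obtain ⟨x, hx, y, hy, hxy⟩ := hc e he (Finset.subset_erase.mpr ⟨hsub, hve⟩)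
        refine ⟨x, hx, y, hy, ?_⟩
        rwa [Function.update_of_ne (ne_of_mem_of_not_mem hx hve),
          Function.update_of_ne (ne_of_mem_of_not_mem hy hve)]
end

section
/- For every integer r ≥ 3, every ε > 0 and every constant K > 0 there exists d₀ = d₀(r, ε, K) such that for every real d ≥ d₀ the following holds. Set δ := (ε/2)·((r−1)d/(r log d))^{1/(r−1)} and u = u(n) := ⌊K·n/d^{1/2}⌋. Then Σ_{s=1}^{u} [ (ne/s) · (dse/((dn−δs)·r))^{δ} · (e·r·r!/(δs))^{δ/r} ]^{s} → 0 as n → ∞. -/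
open Finset Real

/-!
Write `x = s / n`, so `x ≤ K / √d` throughout the sum.  For large `d` the quantity `δ` is large while
`δ s ≤ d n / 2`.  Hence the last factor of the bracket is at most `1` (its base is), the middle one
is at most `(2x)^δ ≤ (2x)^2`, and the whole bracket is at most `(e / x) (2x)^2 = 4 e x`
(`bracket_le`).  Since also `4 e x ≤ 1/2`, the `s`-th summand is at most
`4 e x (1/2)^(s-1) = (8 e / n) s (1/2)^s`, and the convergence of `∑ s (1/2)^s` shows that the sum is
`O(1/n)`.  The conditions on `d` all follow from `d → ∞` (`eventually_large`).
-/

/-- The bracket is at most `4 e s / n` once `δ` is large and `s / n` is small. -/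
lemma bracket_le (r : ℕ) (hr : 3 ≤ r) (d δ n s : ℝ) (hd : 0 < d) (hδ : 2 ≤ δ)
    (hC : Real.exp 1 * r * (r.factorial : ℝ) ≤ δ) (hn : 0 < n) (hs : 1 ≤ s)
    (hδs : δ * s ≤ d * n / 2) (hsn : 2 * s / n ≤ 1) :
    0 ≤ (n * Real.exp 1 / s) * ((d * s * Real.exp 1 / ((d * n - δ * s) * r)) ^ δ) *
        ((Real.exp 1 * r * (r.factorial : ℝ) / (δ * s)) ^ (δ / r)) ∧
    (n * Real.exp 1 / s) * ((d * s * Real.exp 1 / ((d * n - δ * s) * r)) ^ δ) *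
        ((Real.exp 1 * r * (r.factorial : ℝ) / (δ * s)) ^ (δ / r)) ≤
      4 * Real.exp 1 * s / n := by
  have hr' : (3 : ℝ) ≤ r := by exact_mod_cast hr
  have hr0 : (0 : ℝ) < r := by linarith
  have hs0 : 0 < s := by linarith
  have hdn : 0 < d * n := by positivity
  have he : Real.exp 1 < 3 := Real.exp_one_lt_three
  have hδ0 : 0 < δ := by linarith
  have hden : 0 < d * n - δ * s := by linarith
  have hb0 : 0 ≤ d * s * Real.exp 1 / ((d * n - δ * s) * r) := by positivity
  have hc0 : 0 ≤ Real.exp 1 * r * (r.factorial : ℝ) / (δ * s) := by positivity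
  have hb : d * s * Real.exp 1 / ((d * n - δ * s) * r) ≤ 2 * s / n := by
    calc d * s * Real.exp 1 / ((d * n - δ * s) * r) ≤ d * s * 3 / ((d * n / 2) * 3) := by
          gcongr
          linarith
      _ = 2 * s / n := by field_simp
  have hbδ : (d * s * Real.exp 1 / ((d * n - δ * s) * r)) ^ δ ≤ (2 * s / n) ^ 2 := by
    calc _ ≤ (2 * s / n) ^ δ := Real.rpow_le_rpow hb0 hb hδ0.le
      _ ≤ (2 * s / n) ^ (2 : ℝ) :=
          Real.rpow_le_rpow_of_exponent_ge (by positivity) hsn hδ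
      _ = _ := by norm_cast
  have hc : (Real.exp 1 * r * (r.factorial : ℝ) / (δ * s)) ^ (δ / r) ≤ 1 := by
    apply Real.rpow_le_one hc0 _ (by positivity)
    rw [div_le_one (by positivity)]
    nlinarith
  refine ⟨by positivity, ?_⟩
  calc _ ≤ (n * Real.exp 1 / s) * (2 * s / n) ^ 2 * 1 := by gcongr
    _ = _ := by field_simp; ring

lemma eventually_large (r : ℕ) (hr : 3 ≤ r) (ε : ℝ) (hε : 0 < ε) (K : ℝ) (C : ℝ) :
    ∀ᶠ d : ℝ in Filter.atTop,
      1 ≤ d ∧ C ≤ ε / 2 * ((((r : ℝ) - 1) * d / (r * Real.log d)) ^ ((1 : ℝ) / ((r : ℝ) - 1))) ∧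
      ε / 2 * ((((r : ℝ) - 1) * d / (r * Real.log d)) ^ ((1 : ℝ) / ((r : ℝ) - 1))) ≤ ε / 2 * d ∧
      K ≤ d ^ ((1 : ℝ) / 2) := by
  have hr' : (3 : ℝ) ≤ r := by exact_mod_cast hr
  have hlog : Filter.Tendsto (fun d : ℝ => d / Real.log d) Filter.atTop Filter.atTop := by
    have h := (Real.tendsto_exp_div_pow_atTop 1).comp Real.tendsto_log_atTop
    refine h.congr' ?_
    filter_upwards [Filter.eventually_gt_atTop 0] with d hd
    simp [Real.exp_log hd]
  have hbase : Filter.Tendsto (fun d : ℝ => ((r : ℝ) - 1) * d / (r * Real.log d))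
      Filter.atTop Filter.atTop := by
    refine (hlog.const_mul_atTop (r := ((r : ℝ) - 1) / r)
      (div_pos (by linarith) (by linarith))).congr fun d => ?_
    rw [div_mul_div_comm]
  have hp : (0 : ℝ) < 1 / ((r : ℝ) - 1) := one_div_pos.2 (by linarith)
  have hδ := ((tendsto_rpow_atTop hp).comp hbase).const_mul_atTop (half_pos hε)
  filter_upwards [Filter.eventually_ge_atTop 1, hδ.eventually_ge_atTop C,
    Real.tendsto_log_atTop.eventually_ge_atTop 1,
    (tendsto_rpow_atTop (one_half_pos (α := ℝ))).eventually_ge_atTop K] with d h1 h2 h3 h4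
  refine ⟨h1, h2, ?_, h4⟩
  have hbase_le : ((r : ℝ) - 1) * d / (r * Real.log d) ≤ d := by
    rw [div_le_iff₀ (by nlinarith)]
    have : (r : ℝ) ≤ r * Real.log d := by nlinarith
    nlinarith
  have hbase_nonneg : 0 ≤ ((r : ℝ) - 1) * d / (r * Real.log d) :=
    div_nonneg (mul_nonneg (by linarith) (by linarith)) (by nlinarith)
  gcongr
  calc _ ≤ d ^ ((1 : ℝ) / ((r : ℝ) - 1)) := Real.rpow_le_rpow hbase_nonneg hbase_le hp.le
    _ ≤ d ^ (1 : ℝ) := by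
        apply Real.rpow_le_rpow_of_exponent_le h1
        rw [div_le_one (by linarith)]
        linarith
    _ = d := Real.rpow_one d

/-- For every integer `r ≥ 3`, `ε > 0` and `K > 0` there is `d₀` such that for every real
`d ≥ d₀`, with `δ = (ε/2)((r−1)d/(r log d))^(1/(r−1))` and `u(n) = ⌊Kn/√d⌋`,
`Σ_{s=1}^{u} [(ne/s)(dse/((dn−δs)r))^δ (e·r·r!/(δs))^(δ/r)]^s → 0` as `n → ∞`. -/
theorem repair_sum_tendsto_zero (r : ℕ) (hr : 3 ≤ r) (ε : ℝ) (hε : 0 < ε) (K : ℝ)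
    (hK : 0 < K) :
    ∃ d₀ : ℝ, ∀ d : ℝ, d₀ ≤ d →
      ∀ δ : ℝ,
        δ = ε / 2 * ((((r : ℝ) - 1) * d / (r * Real.log d)) ^ ((1 : ℝ) / ((r : ℝ) - 1))) →
        Filter.Tendsto
          (fun n : ℕ =>
            ∑ s ∈ Finset.Icc 1 ⌊K * n / d ^ ((1 : ℝ) / 2)⌋₊,
              (((n : ℝ) * Real.exp 1 / s) *
                  ((d * s * Real.exp 1 / ((d * n - δ * s) * r)) ^ δ) *
                  ((Real.exp 1 * r * (r.factorial : ℝ) / (δ * s)) ^ (δ / r))) ^ s)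
          Filter.atTop (nhds 0) := by
  -- `24 K ≤ √d` gives `4 e s / n ≤ 1/2`, and `ε K ≤ √d` gives `δ s ≤ d n / 2`.
  obtain ⟨d₀, h₀⟩ := Filter.eventually_atTop.1
    (eventually_large r hr ε hε (max (24 * K) (ε * K))
      (max 2 (Real.exp 1 * r * (r.factorial : ℝ))))
  refine ⟨d₀, fun d hd δ hδ => ?_⟩
  obtain ⟨hd1, hδC, hδd, hdK⟩ := h₀ d hd
  rw [← hδ] at hδC hδd
  obtain ⟨hδ2, hδC⟩ := max_le_iff.1 hδC
  obtain ⟨hdK, hdε⟩ := max_le_iff.1 hdK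
  set q := d ^ ((1 : ℝ) / 2) with hq
  have hq0 : 0 < q := by positivity
  have he : Real.exp 1 < 3 := Real.exp_one_lt_three
  have hsum : Summable (fun s : ℕ => (s : ℝ) * (1 / 2 : ℝ) ^ s) := by
    simpa using summable_pow_mul_geometric_of_norm_lt_one 1
      (r := (1 / 2 : ℝ)) (by norm_num)
  have key : ∀ n : ℕ, 0 < n → ∀ s ∈ Finset.Icc 1 ⌊K * n / q⌋₊,
      0 ≤ (((n : ℝ) * Real.exp 1 / s) *
          ((d * s * Real.exp 1 / ((d * n - δ * s) * r)) ^ δ) *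
          ((Real.exp 1 * r * (r.factorial : ℝ) / (δ * s)) ^ (δ / r))) ^ s ∧
      (((n : ℝ) * Real.exp 1 / s) *
          ((d * s * Real.exp 1 / ((d * n - δ * s) * r)) ^ δ) *
          ((Real.exp 1 * r * (r.factorial : ℝ) / (δ * s)) ^ (δ / r))) ^ s ≤
        8 * Real.exp 1 / n * (s * (1 / 2 : ℝ) ^ s) := by
    intro n hn s hs
    obtain ⟨hs1, hsu⟩ := Finset.mem_Icc.1 hs
    have hn' : (0 : ℝ) < n := by exact_mod_cast hn
    have hs1' : (1 : ℝ) ≤ s := by exact_mod_cast hs1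
    have hsu' : (s : ℝ) ≤ K * n / q := (Nat.le_floor_iff (by positivity)).1 hsu
    rw [le_div_iff₀ hq0] at hsu'
    have h24 : 24 * (s : ℝ) ≤ n := by
      have : (24 * (s : ℝ)) * K ≤ n * K := by nlinarith
      exact le_of_mul_le_mul_right this hK
    have hεs : ε * (s : ℝ) ≤ n := by
      have : (ε * (s : ℝ)) * K ≤ n * K := by nlinarith
      exact le_of_mul_le_mul_right this hK
    obtain ⟨hnn, hle⟩ := bracket_le r hr d δ n s (by linarith) hδ2 hδC hn' hs1'
      (by nlinarith) (by rw [div_le_one hn']; linarith)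
    refine ⟨pow_nonneg hnn _, (pow_le_pow_left₀ hnn hle s).trans ?_⟩
    have hhalf : 4 * Real.exp 1 * s / n ≤ 1 / 2 := by
      rw [div_le_iff₀ hn']; nlinarith
    obtain ⟨t, rfl⟩ : ∃ t, s = t + 1 := ⟨s - 1, by omega⟩
    have hnn' : 0 ≤ 4 * Real.exp 1 * ((t + 1 : ℕ) : ℝ) / n := by positivity
    calc (4 * Real.exp 1 * ((t + 1 : ℕ) : ℝ) / n) ^ (t + 1)
        = (4 * Real.exp 1 * ((t + 1 : ℕ) : ℝ) / n) ^ t *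
            (4 * Real.exp 1 * ((t + 1 : ℕ) : ℝ) / n) := pow_succ _ _
      _ ≤ (1 / 2) ^ t * (4 * Real.exp 1 * ((t + 1 : ℕ) : ℝ) / n) := by gcongr
      _ = _ := by rw [pow_succ]; ring
  have hlim : Filter.Tendsto
      (fun n : ℕ => 8 * Real.exp 1 / (n : ℝ) * ∑' s : ℕ, (s : ℝ) * (1 / 2 : ℝ) ^ s)
      Filter.atTop (nhds 0) := by
    simpa using (tendsto_const_div_atTop_nhds_zero_nat (8 * Real.exp 1)).mul_const
      (∑' s : ℕ, (s : ℝ) * (1 / 2 : ℝ) ^ s)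
  refine tendsto_of_tendsto_of_tendsto_of_le_of_le' tendsto_const_nhds hlim ?_ ?_
  · filter_upwards [Filter.eventually_gt_atTop 0] with n hn
    exact Finset.sum_nonneg fun s hs => (key n hn s hs).1
  · filter_upwards [Filter.eventually_gt_atTop 0] with n hn
    refine (Finset.sum_le_sum fun s hs => (key n hn s hs).2).trans ?_
    rw [← Finset.mul_sum]
    gcongr
    exact hsum.sum_le_tsum _ fun s _ => by positivity
end
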